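/- arXiv:1303.5333 — 8 statements merged into one kernel-verified Lean document; each statement's English description precedes it below -/
import Mathlib

section
/- Let Z be a unique factorization domain, let n ≥ 2 be an integer, and let f ∈ Z[X] be irreducible in Z[X] with positive degree m, leading coefficient a, and nonzero constant coefficient b. Say that condition C(m', a', b', n) holds (for m' ∈ ℕ, a', b' ∈ Z) if for every prime number p dividing n and every unit u ∈ Zˣ, at least one of the following is true: (A) u·a' is not a p-th power in Z; (B) (−1)^{m'}·u·b' is not a p-th power in Z, and moreover if 4 divides n then u·b' is not a square in Z. If C(m, a, b, n) holds or C(m, b, a, n) holds, then f(X^n) is irreducible in Z[X]. -/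
open Polynomial

/-- Condition C(m, a, b, n): for each prime `p` dividing `n` and each unit `u`,
either `u·a` is not a `p`-th power, or (`(-1)^m·u·b` is not a `p`-th power and,
if `4 ∣ n`, `u·b` is not a square). -/
def CondC {Z : Type*} [CommRing Z] (m : ℕ) (a b : Z) (n : ℕ) : Prop :=
  ∀ p : ℕ, p.Prime → p ∣ n → ∀ u : Zˣ,
    (¬ ∃ c : Z, (u : Z) * a = c ^ p) ∨
      ((¬ ∃ c : Z, (-1 : Z) ^ m * (u : Z) * b = c ^ p) ∧
        (4 ∣ n → ¬ ∃ c : Z, (u : Z) * b = c ^ 2))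

/-!
Let `K` be the fraction field of `Z` and `x` a root of `f`. Irreducibility of `f(X ^ n)` amounts to
irreducibility of `X ^ n - x` over `K(x)`, which holds as soon as `x` is not a `p`-th power for any
prime `p ∣ n` and, when `4 ∣ n`, `-x` is not a square.

Suppose `x = y ^ p` in `K(x)`. Then `y` has degree `m = deg f` over `K`; let `g` be its minimal
polynomial, scaled to be primitive over `Z`. The polynomial whose roots are the `p`-th powers of the
roots of `g` is again primitive, because modulo each prime it is nonzero, and `f` divides it, so it
equals `u * f` for a unit `u`. Comparing leading and constant coefficients, both `u * a` and
`(-1) ^ m * u * b` are `p`-th powers, which contradicts either condition. If instead `-x = y ^ 2`,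
the same argument applies to `f(-X)`.
-/

section Capelli

open IntermediateField

variable {K E : Type*} [Field K] [Field E] [Algebra K E]

theorem isIntegral_of_minpoly_eq_X_pow_sub_C {n : ℕ} (hn : n ≠ 0) {a : K} {x : E}
    (hx : minpoly K x = X ^ n - C a) : IsIntegral K x :=
  minpoly.ne_zero_iff.1 (hx ▸ X_pow_sub_C_ne_zero hn.pos a)

theorem norm_gen_of_minpoly_eq_X_pow_sub_C {n : ℕ} (hn : n ≠ 0) {a : K} {x : E}
    (hx : minpoly K x = X ^ n - C a) :
    Algebra.norm K (AdjoinSimple.gen K x) = (-1) ^ n * -a := by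
  rw [← adjoin.powerBasis_gen (isIntegral_of_minpoly_eq_X_pow_sub_C hn hx),
    Algebra.PowerBasis.norm_gen_eq_coeff_zero_minpoly]
  simp [minpoly_gen, hx, hn.symm]

theorem norm_neg_gen_of_minpoly_eq_X_pow_sub_C {n : ℕ} (hn : n ≠ 0) {a : K} {x : E}
    (hx : minpoly K x = X ^ n - C a) :
    Algebra.norm K (-AdjoinSimple.gen K x) = -a := by
  have hfinrank : Module.finrank K K⟮x⟯ = n := by
    rw [adjoin.finrank (isIntegral_of_minpoly_eq_X_pow_sub_C hn hx), hx, natDegree_X_pow_sub_C]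
  have hneg : Algebra.norm K (-1 : K⟮x⟯) = (-1) ^ n := by
    simpa [hfinrank] using Algebra.norm_algebraMap (S := K⟮x⟯) (-1 : K)
  rw [← neg_one_mul, map_mul, hneg, norm_gen_of_minpoly_eq_X_pow_sub_C hn hx, ← mul_assoc,
    ← mul_pow, neg_one_mul, neg_neg, one_pow, one_mul]

-- Peel off one prime `p` at a time: with `x ^ p = a`, taking norms from `K⟮x⟯` down to `K` turns a
-- `q`-th root of `x` into a `q`-th root of `±a`, and a square root of `-x` into one of `-a`.
theorem irreducible_X_pow_sub_C_of_forall_prime {K : Type*} [Field K] {n : ℕ} (hn : n ≠ 0) {a : K}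
    (ha : ∀ p : ℕ, p.Prime → p ∣ n → ∀ b : K, b ^ p ≠ a) (h4 : 4 ∣ n → ∀ b : K, b ^ 2 ≠ -a) :
    Irreducible (X ^ n - C a) := by
  induction n using induction_on_primes generalizing K a with
  | zero => exact absurd rfl hn
  | one => simpa using irreducible_X_sub_C a
  | prime_mul p n hp ih =>
    rw [mul_comm]
    refine X_pow_mul_sub_C_irreducible
      (X_pow_sub_C_irreducible_of_prime hp (ha p hp (dvd_mul_right p n))) fun E _ _ x hx ↦
        ih (right_ne_zero_of_mul hn) (fun q hq hqn b hb ↦ ?_) fun h4n b hb ↦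
          h4 (h4n.mul_left p) (Algebra.norm K b) ?_
    · have hroot := ha q hq (hqn.mul_left p)
      have hnorm : Algebra.norm K b ^ q = (-1) ^ p * -a := by
        rw [← map_pow, hb, norm_gen_of_minpoly_eq_X_pow_sub_C hp.ne_zero hx]
      rcases hp.eq_two_or_odd' with rfl | hp_odd
      · rw [neg_one_sq, one_mul] at hnorm
        rcases hq.eq_two_or_odd' with rfl | hq_odd
        · exact h4 (mul_dvd_mul_left 2 hqn) _ hnorm
        · exact hroot (-Algebra.norm K b) (by rw [hq_odd.neg_pow, hnorm, neg_neg])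
      · exact hroot (Algebra.norm K b) (by rw [hnorm, hp_odd.neg_one_pow, neg_one_mul, neg_neg])
    · rw [← map_pow, hb, norm_neg_gen_of_minpoly_eq_X_pow_sub_C hp.ne_zero hx]

end Capelli

section PowRoots

/-- The polynomial `a ^ k * ∏ (X - r ^ k)` attached to `c = a * ∏ (X - r)`, whose roots are the
`k`-th powers of those of `c`. It is the resultant in `Y` of `c(Y)` and `X - Y ^ k`, where the
latter is given the formal degree `k`, so that no splitting field is needed to define it. -/
noncomputable def powRoots {R : Type*} [CommRing R] (c : R[X]) (k : ℕ) : R[X] :=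
  resultant (c.map C) (C X - X ^ k) c.natDegree k

variable {R S : Type*} [CommRing R] [CommRing S] {k : ℕ}

theorem natDegree_C_X_sub_X_pow_le : (C (X : R[X]) - X ^ k).natDegree ≤ k :=
  (natDegree_sub_le_of_le ((natDegree_C _).trans_le k.zero_le) (natDegree_X_pow_le k)).trans_eq
    (max_self k)

-- The sign appears because the formal degree of `c` drops by `d` in the resultant.
theorem map_powRoots (hk : k ≠ 0) (φ : R →+* S) {c : R[X]} {d : ℕ}
    (hd : c.natDegree = (c.map φ).natDegree + d) :
    (powRoots c k).map φ = (-1) ^ (k * d) * (-1) ^ d * powRoots (c.map φ) k := by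
  have hc : (c.map C).map (mapRingHom φ) = (c.map φ).map C := by
    simp only [map_map, mapRingHom_comp_C]
  have hX : (C (X : R[X]) - X ^ k).map (mapRingHom φ) = C (X : S[X]) - X ^ k := by simp
  have hcoeff : (C (X : S[X]) - X ^ k).coeff k = -1 := by simp [coeff_C, hk]
  rw [powRoots, powRoots, ← coe_mapRingHom φ, ← resultant_map_map, coe_mapRingHom, hc, hX, hd,
    resultant_add_left_deg _ _ _ _ _ natDegree_map_le, hcoeff]

theorem map_powRoots_of_injective (hk : k ≠ 0) {φ : R →+* S} (hφ : Function.Injective φ)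
    (c : R[X]) : (powRoots c k).map φ = powRoots (c.map φ) k := by
  simpa using map_powRoots hk φ (d := 0) (natDegree_map_eq_of_injective hφ c).symm

theorem coeff_zero_powRoots (c : R[X]) :
    (powRoots c k).coeff 0 = (-1) ^ c.natDegree * ((-1) ^ c.natDegree * c.coeff 0) ^ k := by
  have hc : (c.map C).map constantCoeff = c := by
    have hconst : (constantCoeff : R[X] →+* R).comp C = RingHom.id R := by ext; simp
    rw [map_map, hconst, map_id]
  have hX : (C (X : R[X]) - X ^ k).map constantCoeff = C (-1) * X ^ k := by simp
  rw [powRoots, ← constantCoeff_apply, ← resultant_map_map, hc, hX, resultant_C_mul_right,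
    resultant_X_pow_right _ _ _ le_rfl, mul_pow, ← pow_mul]

theorem dvd_expand_powRoots (hk : k ≠ 0) (c : R[X]) : c ∣ expand R k (powRoots c k) := by
  obtain ⟨P, Q, -, -, hPQ⟩ := exists_mul_add_mul_eq_C_resultant (c.map C) (C X - X ^ k)
    natDegree_map_le natDegree_C_X_sub_X_pow_le (Or.inr hk)
  -- Substitute `Y = X` and `X = X ^ k`, which kills `X - Y ^ k`.
  have h := congrArg (eval₂RingHom (expand R k : R[X] →+* R[X]) X) hPQ
  have hC : (expand R k : R[X] →+* R[X]).comp C = C := by ext; simp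
  refine ⟨eval₂ (expand R k : R[X] →+* R[X]) X P, ?_⟩
  simpa [eval₂_map, hC, powRoots] using h.symm

variable [IsDomain R]

theorem powRoots_eq_prod_of_splits {c : R[X]} (hc : c.Splits) :
    powRoots c k = C (c.leadingCoeff ^ k) * ((c.roots.map (· ^ k)).map fun r ↦ X - C r).prod := by
  have h := resultant_eq_prod_eval (c.map C) (C X - X ^ k) k natDegree_C_X_sub_X_pow_le
    (hc.map C)
  rw [natDegree_map_eq_of_injective C_injective, leadingCoeff_map_of_injective C_injective,
    hc.roots_map_of_injective C_injective, Multiset.map_map] at h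
  simpa [powRoots, Function.comp_def] using h

theorem natDegree_powRoots (hk : k ≠ 0) (c : R[X]) : (powRoots c k).natDegree = c.natDegree := by
  let ψ := algebraMap (FractionRing R) (AlgebraicClosure (FractionRing R))
  let φ := ψ.comp (algebraMap R (FractionRing R))
  have hφ : Function.Injective φ := ψ.injective.comp (IsFractionRing.injective R (FractionRing R))
  have hsplits : (c.map φ).Splits := IsAlgClosed.splits _
  rcases eq_or_ne c 0 with rfl | hc
  · simp [powRoots]
  have hlead : (c.map φ).leadingCoeff ^ k ≠ 0 :=
    pow_ne_zero k (leadingCoeff_ne_zero.2 ((Polynomial.map_ne_zero_iff hφ).2 hc))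
  rw [← natDegree_map_eq_of_injective hφ, map_powRoots_of_injective hk hφ,
    powRoots_eq_prod_of_splits hsplits, natDegree_C_mul hlead,
    natDegree_multiset_prod_X_sub_C_eq_card, Multiset.card_map, ← hsplits.natDegree_eq_card_roots,
    natDegree_map_eq_of_injective hφ]

theorem leadingCoeff_powRoots (hk : k ≠ 0) (c : R[X]) :
    (powRoots c k).leadingCoeff = c.leadingCoeff ^ k := by
  let ψ := algebraMap (FractionRing R) (AlgebraicClosure (FractionRing R))
  let φ := ψ.comp (algebraMap R (FractionRing R))
  have hφ : Function.Injective φ := ψ.injective.comp (IsFractionRing.injective R (FractionRing R))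
  apply hφ
  rw [← leadingCoeff_map_of_injective hφ, map_powRoots_of_injective hk hφ,
    powRoots_eq_prod_of_splits (IsAlgClosed.splits _), leadingCoeff_mul, leadingCoeff_C,
    (monic_multisetProd_X_sub_C _).leadingCoeff, mul_one, map_pow,
    leadingCoeff_map_of_injective hφ]

theorem powRoots_ne_zero (hk : k ≠ 0) {c : R[X]} (hc : c ≠ 0) : powRoots c k ≠ 0 := by
  rw [← leadingCoeff_ne_zero, leadingCoeff_powRoots hk]
  exact pow_ne_zero k (leadingCoeff_ne_zero.2 hc)

end PowRoots

section Primitive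

theorem C_dvd_iff_map_mk_eq_zero {R : Type*} [CommRing R] {q : R} {f : R[X]} :
    C q ∣ f ↔ f.map (Ideal.Quotient.mk (Ideal.span {q})) = 0 := by
  simp [C_dvd_iff_dvd_coeff, Polynomial.ext_iff, Ideal.Quotient.eq_zero_iff_mem,
    Ideal.mem_span_singleton]

variable {Z : Type*} [CommRing Z]

theorem isPrimitive_expand {f : Z[X]} (hf : f.IsPrimitive) {n : ℕ} (hn : n ≠ 0) :
    (expand Z n f).IsPrimitive := fun r hr ↦
  hf r <| (C_dvd_iff_dvd_coeff r f).2 fun i ↦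
    coeff_expand_mul hn.pos f i ▸ (C_dvd_iff_dvd_coeff r _).1 hr (i * n)

theorem isPrimitive_of_forall_prime [UniqueFactorizationMonoid Z] {h : Z[X]} (h0 : h ≠ 0)
    (hh : ∀ q : Z, Prime q → ¬C q ∣ h) : h.IsPrimitive := by
  intro r hr
  by_contra hunit
  have hr0 : r ≠ 0 := by rintro rfl; exact h0 (by simpa using hr)
  obtain ⟨q, hq, hqr⟩ := WfDvdMonoid.exists_irreducible_factor hunit hr0
  exact hh q hq.prime ((_root_.map_dvd C hqr).trans hr)

variable [IsDomain Z]

theorem exists_unit_C_mul_eq_of_dvd {f h : Z[X]} (hh : h.IsPrimitive) (hfh : f ∣ h)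
    (hdeg : h.natDegree ≤ f.natDegree) : ∃ u : Zˣ, C (u : Z) * f = h := by
  obtain ⟨w, rfl⟩ := hfh
  have hfw := mul_ne_zero_iff.1 hh.ne_zero
  rw [natDegree_mul hfw.1 hfw.2] at hdeg
  obtain ⟨v, rfl⟩ := natDegree_eq_zero.1 (show w.natDegree = 0 by omega)
  obtain ⟨u, rfl⟩ := hh v (dvd_mul_left _ _)
  exact ⟨u, mul_comm _ _⟩

variable [UniqueFactorizationMonoid Z]

theorem isPrimitive_powRoots {k : ℕ} (hk : k ≠ 0) {c : Z[X]} (hc : c.IsPrimitive) :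
    (powRoots c k).IsPrimitive := by
  refine isPrimitive_of_forall_prime (powRoots_ne_zero hk hc.ne_zero) fun q hq hdvd ↦ ?_
  have : (Ideal.span {q}).IsPrime := (Ideal.span_singleton_prime hq.ne_zero).2 hq
  have hc_mod : c.map (Ideal.Quotient.mk (Ideal.span {q})) ≠ 0 := fun h ↦
    hq.not_isUnit (hc q (C_dvd_iff_map_mk_eq_zero.2 h))
  obtain ⟨d, hd⟩ := Nat.exists_eq_add_of_le
    (natDegree_map_le (f := Ideal.Quotient.mk (Ideal.span {q})) (p := c))
  rw [C_dvd_iff_map_mk_eq_zero, map_powRoots hk _ hd] at hdvd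
  exact powRoots_ne_zero hk hc_mod (by simpa using hdvd)

theorem exists_isPrimitive_associated_map {K : Type*} [Field K] [Algebra Z K] [IsFractionRing Z K]
    {F : K[X]} (hF : F ≠ 0) :
    ∃ g : Z[X], g.IsPrimitive ∧ Associated (g.map (algebraMap Z K)) F := by
  let _ : NormalizedGCDMonoid Z := Nonempty.some inferInstance
  let N := IsLocalization.integerNormalization (nonZeroDivisors Z) F
  obtain ⟨s, hs, hN⟩ := IsLocalization.integerNormalization_spec (nonZeroDivisors Z) F
  have isUnit_C_algebraMap {r : Z} (hr : r ≠ 0) : IsUnit (C (algebraMap Z K r)) :=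
    isUnit_C.2 ((map_ne_zero_iff _ (IsFractionRing.injective Z K)).2 hr).isUnit
  have hcontent : N.content ≠ 0 := by
    rw [Ne, content_eq_zero_iff, IsFractionRing.integerNormalization_eq_zero_iff]
    exact hF
  have hN_factor : C (algebraMap Z K N.content) * N.primPart.map (algebraMap Z K) =
      C (algebraMap Z K s) * F := by
    rw [← map_C, ← Polynomial.map_mul, ← eq_C_content_mul_primPart, hN, ← algebraMap_smul K s F,
      smul_eq_C_mul]
  refine ⟨N.primPart, N.isPrimitive_primPart, ?_⟩
  exact (associated_unit_mul_left _ _ (isUnit_C_algebraMap hcontent)).symm.trans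
    (hN_factor ▸ associated_unit_mul_left _ _
      (isUnit_C_algebraMap (nonZeroDivisors.ne_zero hs)))

end Primitive

section RootsInExtension

theorem irreducible_comp_neg_X {R : Type*} [CommRing R] {f : R[X]} (hf : Irreducible f) :
    Irreducible (f.comp (-X)) := by
  simpa [algEquivAevalNegX, comp, aeval_def] using
    (MulEquiv.irreducible_iff (algEquivAevalNegX (R := R))).2 hf

variable {Z K L : Type*} [CommRing Z] [IsDomain Z] [UniqueFactorizationMonoid Z] [Field K]
  [Algebra Z K] [IsFractionRing Z K] [Field L] [Algebra K L] {f : Z[X]}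

theorem exists_unit_C_mul_eq_powRoots (hf : Irreducible f) (hdeg : f.natDegree ≠ 0)
    (hfinrank : Module.finrank K L = f.natDegree) {p : ℕ} (hp : p ≠ 0) {b : L}
    (hb : aeval (b ^ p) (f.map (algebraMap Z K)) = 0) :
    ∃ (g : Z[X]) (u : Zˣ), g.natDegree = f.natDegree ∧ C (u : Z) * f = powRoots g p := by
  have : FiniteDimensional K L := .of_finrank_pos (hfinrank ▸ hdeg.pos)
  have hf_prim : f.IsPrimitive := hf.isPrimitive hdeg
  have hinj := IsFractionRing.injective Z K
  have hb_int : IsIntegral K b := .of_finite K b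
  obtain ⟨g, hg_prim, hg⟩ := exists_isPrimitive_associated_map (Z := Z) (minpoly.ne_zero hb_int)
  have hg_deg : g.natDegree ≤ f.natDegree := by
    rw [← natDegree_map_eq_of_injective hinj,
      natDegree_eq_of_degree_eq (degree_eq_degree_of_associated hg), ← hfinrank]
    exact minpoly.natDegree_le b
  have hroot : aeval (b ^ p) ((powRoots g p).map (algebraMap Z K)) = 0 := by
    rw [map_powRoots_of_injective hp hinj, ← expand_aeval]
    exact aeval_eq_zero_of_dvd_aeval_eq_zero
      (hg.symm.dvd.trans (dvd_expand_powRoots hp _)) (minpoly.aeval K b)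
  have hdvd : f ∣ powRoots g p := by
    rw [hf_prim.dvd_iff_fraction_map_dvd_fraction_map K]
    have hfK := (hf_prim.irreducible_iff_irreducible_map_fraction_map (K := K)).1 hf
    exact (dvd_of_mul_right_eq _ (minpoly.eq_of_irreducible hfK hb)).trans (minpoly.dvd K _ hroot)
  obtain ⟨u, hu⟩ := exists_unit_C_mul_eq_of_dvd (isPrimitive_powRoots hp hg_prim) hdvd
    ((natDegree_powRoots hp g).trans_le hg_deg)
  refine ⟨g, u, ?_, hu⟩
  rw [← natDegree_powRoots hp g, ← hu, natDegree_C_mul u.ne_zero]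

theorem exists_unit_mul_eq_pow_of_aeval_pow_eq_zero (hf : Irreducible f) (hdeg : f.natDegree ≠ 0)
    (hfinrank : Module.finrank K L = f.natDegree) {p : ℕ} (hp : p ≠ 0) {b : L}
    (hb : aeval (b ^ p) (f.map (algebraMap Z K)) = 0) :
    ∃ (u : Zˣ) (c d : Z), u * f.leadingCoeff = c ^ p ∧
      (-1) ^ f.natDegree * u * f.coeff 0 = d ^ p := by
  obtain ⟨g, u, hg, hu⟩ := exists_unit_C_mul_eq_powRoots hf hdeg hfinrank hp hb
  refine ⟨u, g.leadingCoeff, (-1) ^ g.natDegree * g.coeff 0, ?_, ?_⟩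
  · rw [← leadingCoeff_powRoots hp, ← hu, leadingCoeff_mul, leadingCoeff_C]
  · rw [mul_assoc, ← coeff_C_mul, hu, coeff_zero_powRoots, ← hg, ← mul_assoc, ← mul_pow,
      neg_one_mul, neg_neg, one_pow, one_mul]

theorem exists_unit_mul_eq_sq_of_aeval_neg_sq_eq_zero (hf : Irreducible f) (hdeg : f.natDegree ≠ 0)
    (hfinrank : Module.finrank K L = f.natDegree) {b : L}
    (hb : aeval (-b ^ 2) (f.map (algebraMap Z K)) = 0) :
    ∃ (u : Zˣ) (c d : Z), u * f.leadingCoeff = c ^ 2 ∧ u * f.coeff 0 = d ^ 2 := by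
  have hdeg_neg : (f.comp (-X)).natDegree = f.natDegree := by simp [natDegree_comp]
  have hroot : aeval (b ^ 2) ((f.comp (-X)).map (algebraMap Z K)) = 0 := by
    simpa [map_comp, aeval_comp] using hb
  obtain ⟨u, c, d, hc, hd⟩ := exists_unit_mul_eq_pow_of_aeval_pow_eq_zero
    (irreducible_comp_neg_X hf) (hdeg_neg ▸ hdeg) (hdeg_neg ▸ hfinrank) two_ne_zero hroot
  refine ⟨(-1) ^ f.natDegree * u, c, d, ?_, ?_⟩
  · rw [← hc, comp_neg_X_leadingCoeff_eq]
    push_cast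
    ring
  · rw [← hd, hdeg_neg]
    simp [coeff_zero_eq_eval_zero]

end RootsInExtension

section CondC

variable {Z : Type*} [CommRing Z] {m n : ℕ} {a b c d : Z} {u : Zˣ}

theorem not_condC_of_unit_mul_eq_pow {p : ℕ} (hp : p.Prime) (hpn : p ∣ n)
    (ha : u * a = c ^ p) (hb : (-1) ^ m * u * b = d ^ p) : ¬CondC m a b n := fun h ↦
  (h p hp hpn u).elim (fun hA ↦ hA ⟨c, ha⟩) fun hB ↦ hB.1 ⟨d, hb⟩

theorem not_condC_swap_of_unit_mul_eq_pow {p : ℕ} (hp : p.Prime) (hpn : p ∣ n)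
    (ha : u * a = c ^ p) (hb : (-1) ^ m * u * b = d ^ p) : ¬CondC m b a n := by
  refine not_condC_of_unit_mul_eq_pow (u := (-1) ^ m * u) (d := c) hp hpn (by simpa using hb) ?_
  rw [← ha]
  push_cast
  rw [← mul_assoc, ← mul_pow, neg_one_mul, neg_neg, one_pow, one_mul]

theorem not_condC_of_unit_mul_eq_sq (hn : 4 ∣ n) (ha : u * a = c ^ 2) (hb : u * b = d ^ 2) :
    ¬CondC m a b n := fun h ↦
  (h 2 Nat.prime_two (dvd_trans (by norm_num) hn) u).elim (fun hA ↦ hA ⟨c, ha⟩) fun hB ↦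
    hB.2 hn ⟨d, hb⟩

end CondC

section Reduction

open IntermediateField

universe u

theorem irreducible_comp_of_forall_finrank_eq {K : Type u} [Field K] {F g : K[X]}
    (hF : Irreducible F) (hg : g.Monic)
    (h : ∀ (L : Type u) [Field L] [Algebra K L] (x : L), Module.finrank K L = F.natDegree →
      aeval x F = 0 → Irreducible (g.map (algebraMap K L) - C x)) :
    Irreducible (F.comp g) := by
  have hlead : F.leadingCoeff⁻¹ ≠ 0 := inv_ne_zero (leadingCoeff_ne_zero.2 hF.ne_zero)
  have hunit : IsUnit (C F.leadingCoeff⁻¹) := isUnit_C.2 hlead.isUnit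
  have hirr : Irreducible (F * C F.leadingCoeff⁻¹) := (irreducible_mul_isUnit hunit).2 hF
  suffices Irreducible ((F * C F.leadingCoeff⁻¹).comp g) by
    rwa [mul_comp, C_comp, irreducible_mul_isUnit hunit] at this
  refine irreducible_comp (monic_mul_leadingCoeff_inv hF.ne_zero) hg hirr fun E _ _ x hx ↦
    h K⟮x⟯ (AdjoinSimple.gen K x) ?_ ?_
  · have hint : IsIntegral K x := minpoly.ne_zero_iff.1 (hx ▸ hirr.ne_zero)
    rw [adjoin.finrank hint, hx, natDegree_mul_C hlead]
  · rw [← minpoly.dvd_iff, minpoly_gen, hx]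
    exact (associated_mul_unit_left _ _ hunit).dvd

theorem irreducible_comp_X_pow_of_forall_finrank_eq {Z : Type*} {K : Type u} [CommRing Z]
    [IsDomain Z] [UniqueFactorizationMonoid Z] [Field K] [Algebra Z K] [IsFractionRing Z K]
    {f : Z[X]} (hf : Irreducible f) (hdeg : f.natDegree ≠ 0) {n : ℕ} (hn : n ≠ 0)
    (h : ∀ (L : Type u) [Field L] [Algebra K L] (x : L), Module.finrank K L = f.natDegree →
      aeval x (f.map (algebraMap Z K)) = 0 → Irreducible (X ^ n - C x)) :
    Irreducible (f.comp (X ^ n)) := by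
  have hinj := IsFractionRing.injective Z K
  have hf_prim : f.IsPrimitive := hf.isPrimitive hdeg
  have hcomp_prim : (f.comp (X ^ n)).IsPrimitive := by
    rw [← expand_eq_comp_X_pow]
    exact isPrimitive_expand hf_prim hn
  refine hcomp_prim.irreducible_of_irreducible_map_of_injective hinj ?_
  rw [map_comp, Polynomial.map_pow, map_X]
  refine irreducible_comp_of_forall_finrank_eq
    (hf_prim.irreducible_iff_irreducible_map_fraction_map.1 hf) (monic_X_pow n)
    fun L _ _ x hfinrank hx ↦ ?_
  rw [natDegree_map_eq_of_injective hinj] at hfinrank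
  simpa using h L x hfinrank hx

end Reduction

theorem stmt0 {Z : Type*} [CommRing Z] [IsDomain Z] [UniqueFactorizationMonoid Z]
    {n : ℕ} (hn : 2 ≤ n) {f : Polynomial Z} (hf : Irreducible f)
    (hdeg : 0 < f.natDegree) (hb : f.coeff 0 ≠ 0)
    (hC : CondC f.natDegree f.leadingCoeff (f.coeff 0) n ∨
          CondC f.natDegree (f.coeff 0) f.leadingCoeff n) :
    Irreducible (f.comp (X ^ n)) := by
  have hn0 : n ≠ 0 := by omega
  refine irreducible_comp_X_pow_of_forall_finrank_eq (K := FractionRing Z) hf hdeg.ne' hn0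
    fun L _ _ x hfinrank hx ↦ irreducible_X_pow_sub_C_of_forall_prime hn0 ?_ ?_
  · rintro p hp hpn y rfl
    obtain ⟨u, c, d, hc, hd⟩ :=
      exists_unit_mul_eq_pow_of_aeval_pow_eq_zero hf hdeg.ne' hfinrank hp.ne_zero hx
    exact hC.elim (not_condC_of_unit_mul_eq_pow hp hpn hc hd)
      (not_condC_swap_of_unit_mul_eq_pow hp hpn hc hd)
  · intro h4 y hy
    obtain ⟨u, c, d, hc, hd⟩ := exists_unit_mul_eq_sq_of_aeval_neg_sq_eq_zero hf hdeg.ne' hfinrank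
      (b := y) (by rwa [hy, neg_neg])
    exact hC.elim (not_condC_of_unit_mul_eq_sq h4 hc hd) (not_condC_of_unit_mul_eq_sq h4 hd hc)
end

section
/- Let K be a field and let f, g ∈ K[X] both have positive degree. Let F be a splitting field of f over K and let α ∈ F be a root of f. Then f(g(X)) = f.comp g is irreducible in K[X] if and only if f is irreducible in K[X] and the polynomial g(X) − α (the image of g under the map K[X] → K(α)[X] minus the constant polynomial α) is irreducible in K(α)[X], where K(α) denotes the intermediate field of F/K generated by α. -/
open Polynomial IntermediateField

/-!
For nonconstant `g`, choose `β` in an extension of `F` with `g(β) = α`. Then `β` is a root of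
`f(g(X))` over `K` and of `g(X) - α` over `K(α)`, and a nonzero polynomial with a given root is
irreducible exactly when its degree equals the degree of that root. As `K(α) ⊆ K(β)`, the tower
law gives `[K(β) : K] = [K(α) : K] · [K(α)(β) : K(α)]`, where the factors on the right are at most
`deg f` and `deg g`. So the left side reaches `deg f · deg g = deg f(g(X))` if and only if both
factors are maximal.
-/

section DegreeOfRoot

variable {K E : Type*} [Field K] [Field E] [Algebra K E] {p : K[X]} {x : E}

theorem finrank_adjoin_simple_pos_of_aeval_eq_zero (hp : p ≠ 0) (hx : aeval x p = 0) :
    0 < Module.finrank K K⟮x⟯ := by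
  have hint : IsIntegral K x := isAlgebraic_iff_isIntegral.mp ⟨p, hp, hx⟩
  rw [adjoin.finrank hint]
  exact minpoly.natDegree_pos hint

theorem finrank_adjoin_simple_le_natDegree (hp : p ≠ 0) (hx : aeval x p = 0) :
    Module.finrank K K⟮x⟯ ≤ p.natDegree := by
  rw [adjoin.finrank (isAlgebraic_iff_isIntegral.mp ⟨p, hp, hx⟩)]
  exact natDegree_le_of_dvd (minpoly.dvd K x hx) hp

theorem irreducible_iff_finrank_adjoin_simple_eq_natDegree (hp : p ≠ 0) (hx : aeval x p = 0) :
    Irreducible p ↔ Module.finrank K K⟮x⟯ = p.natDegree := by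
  have hint : IsIntegral K x := isAlgebraic_iff_isIntegral.mp ⟨p, hp, hx⟩
  have hdvd : minpoly K x ∣ p := minpoly.dvd K x hx
  rw [adjoin.finrank hint]
  constructor
  · intro hirr
    have hassoc : Associated (minpoly K x) p :=
      (minpoly.irreducible hint).associated_of_dvd hirr hdvd
    exact natDegree_eq_of_degree_eq (degree_eq_degree_of_associated hassoc)
  · intro hdeg
    exact (associated_of_dvd_of_natDegree_le hdvd hp hdeg.ge).irreducible
      (minpoly.irreducible hint)

end DegreeOfRoot

section Tower

variable {K F E : Type*} [Field K] [Field F] [Field E] [Algebra K F] [Algebra F E] [Algebra K E]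
  [IsScalarTower K F E] {α : F} {β : E}

theorem restrictScalars_adjoin_simple_adjoin_simple_of_mem (h : algebraMap F E α ∈ K⟮β⟯) :
    K⟮α⟯⟮β⟯.restrictScalars K = K⟮β⟯ := by
  apply le_antisymm
  · have hα : K⟮α⟯ ≤ K⟮β⟯.comap (IsScalarTower.toAlgHom K F E) := adjoin_simple_le_iff.mpr h
    have hrange : Set.range (algebraMap K⟮α⟯ E) ⊆ K⟮β⟯.toSubfield := by
      rintro _ ⟨y, rfl⟩
      exact hα y.2
    exact adjoin_le_subfield _ _ hrange (Set.singleton_subset_iff.mpr (mem_adjoin_simple_self K β))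
  · exact adjoin_simple_le_iff.mpr (mem_adjoin_simple_self K⟮α⟯ β)

theorem finrank_adjoin_simple_mul_finrank_adjoin_simple (h : algebraMap F E α ∈ K⟮β⟯) :
    Module.finrank K K⟮α⟯ * Module.finrank K⟮α⟯ K⟮α⟯⟮β⟯ = Module.finrank K K⟮β⟯ := by
  rw [← restrictScalars_adjoin_simple_adjoin_simple_of_mem h]
  exact Module.finrank_mul_finrank K K⟮α⟯ K⟮α⟯⟮β⟯

variable {f g : K[X]}

theorem aeval_map_sub_C_gen_eq_zero_iff :
    aeval β (g.map (algebraMap K K⟮α⟯) - C (AdjoinSimple.gen K α)) = 0 ↔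
      aeval β g = algebraMap F E α := by
  rw [map_sub, aeval_map_algebraMap, aeval_C, sub_eq_zero]
  rfl

theorem irreducible_comp_iff_of_aeval_eq (hf : f ≠ 0) (hg : 0 < g.natDegree)
    (hα : aeval α f = 0) (hβ : aeval β g = algebraMap F E α) :
    Irreducible (f.comp g) ↔
      Irreducible f ∧ Irreducible (g.map (algebraMap K K⟮α⟯) - C (AdjoinSimple.gen K α)) := by
  set p := g.map (algebraMap K K⟮α⟯) - C (AdjoinSimple.gen K α)
  have hp_natDegree : p.natDegree = g.natDegree := by rw [natDegree_sub_C, natDegree_map]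
  have hp : p ≠ 0 := ne_zero_of_natDegree_gt (hp_natDegree ▸ hg)
  have hpβ : aeval β p = 0 := aeval_map_sub_C_gen_eq_zero_iff.mpr hβ
  have hcomp : f.comp g ≠ 0 := by
    rw [Ne, comp_eq_zero_iff]
    rintro (h | ⟨-, h⟩)
    · exact hf h
    · exact hg.ne' (h ▸ natDegree_C _)
  have hcompβ : aeval β (f.comp g) = 0 := by
    rw [aeval_comp, hβ, aeval_algebraMap_apply, hα, map_zero]
  have hmem : algebraMap F E α ∈ K⟮β⟯ :=
    hβ ▸ algebra_adjoin_le_adjoin K {β} (aeval_mem_adjoin_singleton K β)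
  rw [irreducible_iff_finrank_adjoin_simple_eq_natDegree hcomp hcompβ,
    irreducible_iff_finrank_adjoin_simple_eq_natDegree hf hα,
    irreducible_iff_finrank_adjoin_simple_eq_natDegree hp hpβ,
    ← finrank_adjoin_simple_mul_finrank_adjoin_simple hmem, natDegree_comp, ← hp_natDegree]
  exact mul_eq_mul_iff_eq_and_eq_of_pos (finrank_adjoin_simple_le_natDegree hf hα)
    (finrank_adjoin_simple_le_natDegree hp hpβ)
    (finrank_adjoin_simple_pos_of_aeval_eq_zero hf hα) (hp_natDegree ▸ hg)

end Tower

theorem stmt1_general {K F : Type*} [Field K] [Field F] [Algebra K F] (f g : K[X]) (α : F)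
    (hα : aeval α f = 0) :
    Irreducible (f.comp g) ↔
      Irreducible f ∧ Irreducible (g.map (algebraMap K K⟮α⟯) - C (AdjoinSimple.gen K α)) := by
  rcases eq_or_ne f 0 with rfl | hf
  · simp only [zero_comp, not_irreducible_zero, false_and]
  rcases g.natDegree.eq_zero_or_pos with hg | hg
  · obtain ⟨c, rfl⟩ := natDegree_eq_zero.mp hg
    simp only [comp_C, map_C, ← C_sub, not_irreducible_C, and_false]
  obtain ⟨β, hβ⟩ : ∃ β : AlgebraicClosure F,
      aeval β (g.map (algebraMap K K⟮α⟯) - C (AdjoinSimple.gen K α)) = 0 := by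
    apply IsAlgClosed.exists_aeval_eq_zero
    apply degree_ne_of_natDegree_ne
    rw [natDegree_sub_C, natDegree_map]
    exact hg.ne'
  exact irreducible_comp_iff_of_aeval_eq hf hg hα (aeval_map_sub_C_gen_eq_zero_iff.mp hβ)

theorem stmt1 {K F : Type*} [Field K] [Field F] [Algebra K F]
    (f g : Polynomial K) (hf : 0 < f.natDegree) (hg : 0 < g.natDegree)
    [Polynomial.IsSplittingField K F f]
    (α : F) (hα : Polynomial.aeval α f = 0) :
    Irreducible (f.comp g) ↔
      Irreducible f ∧
        Irreducible
          (g.map (algebraMap K K⟮α⟯) - Polynomial.C (IntermediateField.AdjoinSimple.gen K α)) :=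
  stmt1_general f g α hα
end

section
/- Let Z be a unique factorization domain with field of fractions Q, and let K be a field extension of Q. Let P = ∑_{k=0}^{m} a_k X^k ∈ Z[X] be a primitive polynomial of degree m with a_0 ≠ 0. Let L ∈ Z[X] be monic of positive degree n whose constant coefficient c_0 is relatively prime to a_0 in Z (every common divisor of c_0 and a_0 is a unit), and suppose that the image of L in K[X] factors as ∏_{j=1}^{n} (X − λ_j) with all λ_j ∈ K nonzero. Then the polynomial ∏_{j=1}^{n} P(λ_j X) ∈ K[X] is the image of a polynomial P* ∈ Z[X] under the map Z[X] → K[X], and P* is primitive in Z[X]. -/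
open Polynomial

/-!
The product `∏ P(λ_j X)` is the resultant, with respect to `Y`, of `L(Y)` and `P(XY)`, so it has
coefficients in `Z`, and its formation commutes with ring homomorphisms out of `Z`. If it were
divisible by some `p` that is prime or zero, reduce modulo `p` and pass to an algebraic closure of
the residue field, where `L` splits: some factor `P(μX)` with `L(μ) = 0` vanishes. If `μ ≠ 0`, all
coefficients of `P` vanish modulo `p`; if `μ = 0`, both constant coefficients do.
-/

section Resultant

variable {R S : Type*} [CommRing R] [CommRing S]

theorem resultant_multiset_prod_X_sub_C_left (s : Multiset R) (g : R[X]) (n : ℕ)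
    (hg : g.natDegree ≤ n) :
    (s.map fun a ↦ X - C a).prod.resultant g s.card n = (s.map fun a ↦ g.eval a).prod := by
  nontriviality R
  induction s using Multiset.induction with
  | empty => simp
  | cons a s ih =>
    have hmul := resultant_mul_left (X - C a) (s.map fun a ↦ X - C a).prod g n hg
    rw [natDegree_X_sub_C, natDegree_multiset_prod_X_sub_C_eq_card,
      resultant_X_sub_C_left g n a hg, ih] at hmul
    rwa [Multiset.map_cons, Multiset.prod_cons, Multiset.card_cons, add_comm, Multiset.map_cons,
      Multiset.prod_cons]

/-- The polynomial `∏ P(λX)`, with `λ` running over the roots of the monic polynomial `L`, defined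
without reference to the roots as the resultant of `L(Y)` and `P(XY)` with respect to `Y`. In
`R[X][X]` the outer variable is `Y`, and the inner one, `C X`, is the variable of the result. -/
noncomputable def rootScaleProd (P L : R[X]) : R[X] :=
  resultant (L.map C) ((P.map C).comp (C X * X)) L.natDegree P.natDegree

theorem natDegree_map_C_comp_C_X_mul_X_le (P : R[X]) :
    ((P.map C).comp (C X * X)).natDegree ≤ P.natDegree :=
  calc ((P.map C).comp (C X * X)).natDegree
      ≤ (P.map C).natDegree * (C X * X : R[X][X]).natDegree := natDegree_comp_le
    _ ≤ P.natDegree * 1 := Nat.mul_le_mul natDegree_map_le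
        ((natDegree_C_mul_le _ _).trans natDegree_X_le)
    _ = P.natDegree := mul_one _

theorem map_rootScaleProd (φ : R →+* S) (P L : R[X]) :
    (rootScaleProd P L).map φ =
      resultant ((L.map φ).map C) (((P.map φ).map C).comp (C X * X))
        L.natDegree P.natDegree := by
  have map_C_comm (f : R[X]) : (f.map C).map (mapRingHom φ) = (f.map φ).map C := by
    rw [Polynomial.map_map, Polynomial.map_map, mapRingHom_comp_C]
  rw [← coe_mapRingHom, rootScaleProd, ← resultant_map_map, Polynomial.map_comp, map_C_comm,
    map_C_comm, Polynomial.map_mul, map_C, coe_mapRingHom, map_X, map_X]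

theorem map_rootScaleProd_eq_multiset_prod (φ : R →+* S) (P : R[X]) {L : R[X]} (hL : L.Monic)
    {s : Multiset S} (hs : L.map φ = (s.map fun a ↦ X - C a).prod) :
    (rootScaleProd P L).map φ = (s.map fun a ↦ (P.map φ).comp (C a * X)).prod := by
  nontriviality S
  have hdeg : L.natDegree = (s.map C).card := by
    rw [← hL.natDegree_map φ, hs, natDegree_multiset_prod_X_sub_C_eq_card, Multiset.card_map]
  have hfac : (L.map φ).map C = ((s.map C).map fun a ↦ X - C a).prod := by
    simp [hs, Polynomial.map_multiset_prod, Multiset.map_map]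
  have heval (a : S) :
      (((P.map φ).map C).comp (C X * X)).eval (C a) = (P.map φ).comp (C a * X) := by
    rw [eval_comp, eval_map, eval_mul, eval_C, eval_X, X_mul_C, comp]
  rw [map_rootScaleProd, hdeg, hfac, resultant_multiset_prod_X_sub_C_left _ _ _
    ((natDegree_map_C_comp_C_X_mul_X_le _).trans natDegree_map_le), Multiset.map_map]
  simp only [Function.comp_apply, heval]

theorem map_eq_zero_or_of_map_rootScaleProd_eq_zero [IsDomain S] (φ : R →+* S) {P L : R[X]}
    (hL : L.Monic) (hsplits : (L.map φ).Splits) (h : (rootScaleProd P L).map φ = 0) :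
    P.map φ = 0 ∨ φ (L.coeff 0) = 0 ∧ φ (P.coeff 0) = 0 := by
  have hroots := hsplits.eq_prod_roots_of_monic (hL.map φ)
  rw [map_rootScaleProd_eq_multiset_prod φ P hL hroots, Multiset.prod_eq_zero_iff,
    Multiset.mem_map] at h
  obtain ⟨μ, hμ, hPμ⟩ := h
  obtain rfl | hμ0 := eq_or_ne μ 0
  · right
    constructor
    · rw [← coeff_map, coeff_zero_eq_eval_zero]
      exact (isRoot_of_mem_roots hμ).eq_zero
    · simpa [coeff_zero_eq_eval_zero] using congrArg (coeff · 0) hPμ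
  · exact .inl ((comp_C_mul_X_eq_zero_iff (mem_nonZeroDivisors_of_ne_zero hμ0)).mp hPμ)

theorem mem_map_C_or_of_rootScaleProd_mem_map_C (p : Ideal R) [p.IsPrime] {P L : R[X]}
    (hL : L.Monic) (h : rootScaleProd P L ∈ p.map C) :
    P ∈ p.map C ∨ L.coeff 0 ∈ p ∧ P.coeff 0 ∈ p := by
  let φ : R →+* AlgebraicClosure p.ResidueField := algebraMap _ _
  have mem_iff (x : R) : x ∈ p ↔ φ x = 0 := by
    rw [IsScalarTower.algebraMap_apply R p.ResidueField, map_eq_zero,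
      Ideal.algebraMap_residueField_eq_zero]
  have mem_map_C_iff (f : R[X]) : f ∈ p.map C ↔ f.map φ = 0 := by
    simp only [Ideal.mem_map_C_iff, Polynomial.ext_iff, mem_iff, coeff_map, coeff_zero]
  rw [mem_map_C_iff] at h ⊢
  rw [mem_iff, mem_iff]
  exact map_eq_zero_or_of_map_rootScaleProd_eq_zero φ hL (IsAlgClosed.splits _) h

end Resultant

section UniqueFactorization

variable {Z : Type*} [CommRing Z] [IsDomain Z] [UniqueFactorizationMonoid Z]

theorem exists_isPrime_span_singleton_and_dvd {r : Z} (hr : ¬IsUnit r) :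
    ∃ p : Z, (Ideal.span {p}).IsPrime ∧ p ∣ r := by
  obtain rfl | hr0 := eq_or_ne r 0
  · exact ⟨0, Ideal.span_singleton_zero (α := Z) ▸ Ideal.isPrime_bot, dvd_rfl⟩
  · obtain ⟨p, hp, hpr⟩ := WfDvdMonoid.exists_irreducible_factor hr hr0
    exact ⟨p, (Ideal.span_singleton_prime hp.ne_zero).mpr hp.prime, hpr⟩

theorem isPrimitive_rootScaleProd {P L : Z[X]} (hP : P.IsPrimitive) (hL : L.Monic)
    (hcop : IsRelPrime (L.coeff 0) (P.coeff 0)) : (rootScaleProd P L).IsPrimitive := by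
  intro r hr
  by_contra hunit
  obtain ⟨p, hp, hpr⟩ := exists_isPrime_span_singleton_and_dvd hunit
  have hp_unit : ¬IsUnit p := fun h ↦ hp.ne_top (Ideal.span_singleton_eq_top.mpr h)
  have mem_map_C_iff (f : Z[X]) : f ∈ (Ideal.span {p}).map C ↔ C p ∣ f := by
    rw [Ideal.map_span, Set.image_singleton, Ideal.mem_span_singleton]
  have hmem : rootScaleProd P L ∈ (Ideal.span {p}).map C :=
    (mem_map_C_iff _).mpr ((map_dvd C hpr).trans hr)
  rcases mem_map_C_or_of_rootScaleProd_mem_map_C _ hL hmem with hPp | ⟨hL0, hP0⟩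
  · exact hp_unit (hP p ((mem_map_C_iff P).mp hPp))
  · exact hp_unit (hcop (Ideal.mem_span_singleton.mp hL0) (Ideal.mem_span_singleton.mp hP0))

theorem stmt2_general {K ι : Type*} [CommRing K] [Algebra Z K] [Fintype ι]
    (P : Z[X]) (hP : P.IsPrimitive) (L : Z[X]) (hL : L.Monic)
    (hcop : IsRelPrime (L.coeff 0) (P.coeff 0)) (lam : ι → K)
    (hfac : L.map (algebraMap Z K) = ∏ j, (X - C (lam j))) :
    ∃ Pstar : Z[X], Pstar.IsPrimitive ∧
      Pstar.map (algebraMap Z K) = ∏ j, (P.map (algebraMap Z K)).comp (C (lam j) * X) := by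
  refine ⟨rootScaleProd P L, isPrimitive_rootScaleProd hP hL hcop, ?_⟩
  have hfac' : L.map (algebraMap Z K) =
      ((Finset.univ.val.map lam).map fun a ↦ X - C a).prod := by
    rw [hfac, Multiset.map_map]
    rfl
  rw [map_rootScaleProd_eq_multiset_prod _ P hL hfac', Multiset.map_map]
  rfl

end UniqueFactorization

theorem stmt2 {Z Q K : Type*} [CommRing Z] [IsDomain Z] [UniqueFactorizationMonoid Z]
    [Field Q] [Algebra Z Q] [IsFractionRing Z Q]
    [Field K] [Algebra Q K] [Algebra Z K] [IsScalarTower Z Q K]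
    (P : Polynomial Z) (m : ℕ) (hm : P.natDegree = m) (hP : P.IsPrimitive)
    (ha0 : P.coeff 0 ≠ 0)
    (L : Polynomial Z) (hL : L.Monic) (n : ℕ) (hn : 0 < n) (hLdeg : L.natDegree = n)
    (hcop : IsRelPrime (L.coeff 0) (P.coeff 0))
    (lam : Fin n → K) (hlam : ∀ j, lam j ≠ 0)
    (hfac : L.map (algebraMap Z K) = ∏ j : Fin n, (X - C (lam j))) :
    ∃ Pstar : Polynomial Z, Pstar.IsPrimitive ∧
      Pstar.map (algebraMap Z K) =
        ∏ j : Fin n, (P.map (algebraMap Z K)).comp (C (lam j) * X) :=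
  stmt2_general P hP L hL hcop lam hfac
end

section
/- Let F be a field, p a prime number, and g ∈ F[X] an irreducible polynomial of degree d ≥ 1. If P ∈ F[X] has degree d and P divides g(X^p) in F[X], then P is irreducible in F[X]. -/
open Polynomial

/-!
Let `θ` be a root of an irreducible factor `Q` of `P`. Since `Q ∣ g(f)`, the element `f(θ)` of
`F(θ)` is a root of `g`, so `deg g = [F(f(θ)) : F]` divides `[F(θ) : F] = deg Q`. Hence no
irreducible factor of `P` has degree less than `deg g = deg P`.
-/

section

variable {F : Type*} [Field F]

theorem natDegree_dvd_finrank_of_aeval_eq_zero {L : Type*} [Field L] [Algebra F L] {g : F[X]}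
    (hg : Irreducible g) {x : L} (hx : aeval x g = 0) : g.natDegree ∣ Module.finrank F L := by
  have x_integral : IsIntegral F x := IsAlgebraic.isIntegral ⟨g, hg.ne_zero, hx⟩
  have natDegree_minpoly : (minpoly F x).natDegree = g.natDegree := by
    rw [← minpoly.eq_of_irreducible hg hx, natDegree_mul_leadingCoeff_inv g hg.ne_zero]
  exact natDegree_minpoly ▸ minpoly.degree_dvd x_integral

theorem natDegree_dvd_natDegree_of_dvd_comp {f g Q : F[X]} (hg : Irreducible g)
    (hQ : Irreducible Q) (hdvd : Q ∣ g.comp f) : g.natDegree ∣ Q.natDegree := by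
  have : Fact (Irreducible Q) := ⟨hQ⟩
  have finrank_adjoinRoot : Module.finrank F (AdjoinRoot Q) = Q.natDegree :=
    (AdjoinRoot.powerBasis hQ.ne_zero).finrank
  have aeval_eq_zero : aeval (aeval (AdjoinRoot.root Q) f) g = 0 := by
    rw [← aeval_comp]
    exact aeval_eq_zero_of_dvd_aeval_eq_zero hdvd (AdjoinRoot.eval₂_root Q)
  exact finrank_adjoinRoot ▸ natDegree_dvd_finrank_of_aeval_eq_zero hg aeval_eq_zero

theorem stmt5_general {f g P : F[X]} (hg : Irreducible g) (hP : P.natDegree = g.natDegree)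
    (hdvd : P ∣ g.comp f) : Irreducible P := by
  have natDegree_pos : 0 < P.natDegree := hP ▸ hg.natDegree_pos
  obtain ⟨Q, hQ, hQP⟩ := exists_irreducible_of_natDegree_pos natDegree_pos
  have natDegree_le : P.natDegree ≤ Q.natDegree := hP ▸ Nat.le_of_dvd hQ.natDegree_pos
    (natDegree_dvd_natDegree_of_dvd_comp hg hQ (hQP.trans hdvd))
  have hP0 : P ≠ 0 := ne_zero_of_natDegree_gt natDegree_pos
  exact (associated_of_dvd_of_natDegree_le hQP hP0 natDegree_le).irreducible hQ

end

theorem stmt5 {F : Type*} [Field F] (p : ℕ) (hp : p.Prime)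
    (g : Polynomial F) (hg : Irreducible g) (d : ℕ) (hd : 1 ≤ d) (hgd : g.natDegree = d)
    (P : Polynomial F) (hP : P.natDegree = d) (hdvd : P ∣ g.comp (X ^ p)) :
    Irreducible P :=
  stmt5_general hg (hP.trans hgd.symm) hdvd
end

section
/- Let Z be a unique factorization domain, let f ∈ Z[X] be irreducible in Z[X] of positive degree m with leading coefficient a, and let s ≥ 1 be an integer. Then f(X^{2^s}) is not irreducible in Z[X] if and only if there exist polynomials S_0, S_1 ∈ Z[X] and a unit u ∈ Zˣ with u·a a square in Z such that either (−1)^m·u·f(X) = S_0(X)^2 − X·S_1(X)^2, or else s ≥ 2 and u·f(X^2) = S_0(X)^2 − X·S_1(X)^2. -/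
open Polynomial

/-!
The norm of `g ∈ Z[X]` over the subring `Z[X²]` is `g(X) g(-X)`. Read as a polynomial in `X²`, it is
the Graeffe transform `N g = A² - X B²`, where `g = A(X²) + X B(X²)`.

Let `F` be prime. If `F(X²) = g k` is a proper factorization, then `F² = N g * N k`, so `N g` is
associated to `F`; conversely, `N g` being associated to `F` makes `g(X) g(-X)` a proper
factorization of `F(X²)` up to a unit. This decides the irreducibility of `f(X²)`, and that of
`f(X⁴)` when `f(X²)` is irreducible.

Nothing new happens later: if `F = H(X⁴)` is prime, so is `F(X²)`. Otherwise `F ∣ A² - X B²` for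
some `A`, `B` not both divisible by `F`, so `X` is a square modulo `H(X⁴)`. Taking norms, `-X` is a
square modulo `H(X²)`, hence so is `X`, by the symmetry `X ↦ -X`. Substituting `X²` for `X`,
the class of `X` modulo `H(X⁴)` becomes a fraction of polynomials in `X²`, which contradicts the
uniqueness of the decomposition `A(X²) + X B(X²)`.
-/

theorem associated_of_mul_eq_prime_sq {M : Type*} [CommMonoidWithZero M] [IsCancelMulZero M]
    {p a b : M} (hp : Prime p) (ha : ¬IsUnit a) (hb : ¬IsUnit b) (h : a * b = p ^ 2) :
    Associated a p := by
  rcases hp.dvd_or_dvd (Dvd.intro_left p (by rw [h, sq])) with ⟨c, rfl⟩ | ⟨c, rfl⟩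
  · have hc : p = c * b := mul_left_cancel₀ hp.ne_zero (by rw [← sq, ← h, mul_assoc])
    have hunit := (hp.irreducible.isUnit_or_isUnit hc).resolve_right hb
    exact associated_mul_unit_left p c hunit
  · have hc : p = a * c :=
      mul_left_cancel₀ hp.ne_zero (by rw [← sq, ← h, mul_left_comm])
    have hunit := (hp.irreducible.isUnit_or_isUnit hc).resolve_left ha
    rw [hc]
    exact associated_mul_unit_right a c hunit

section Parity

variable {R : Type*} [CommSemiring R]

theorem expand_dvd_expand_iff {n : ℕ} (hn : n ≠ 0) {G p : R[X]} :
    expand R n G ∣ expand R n p ↔ G ∣ p := by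
  constructor
  · rintro ⟨r, hr⟩
    refine ⟨contract n r, ?_⟩
    rw [← contract_expand n hn (f := p), hr, mul_comm, contract_mul_expand hn, mul_comm]
  · rintro ⟨r, rfl⟩
    exact ⟨expand R n r, map_mul _ _ _⟩

/-- The polynomial `A` in the decomposition `p = A(X²) + X B(X²)`. -/
noncomputable def evenPart (p : R[X]) : R[X] := contract 2 p

/-- The polynomial `B` in the decomposition `p = A(X²) + X B(X²)`. -/
noncomputable def oddPart (p : R[X]) : R[X] := contract 2 p.divX

theorem coeff_evenPart (p : R[X]) (n : ℕ) : (evenPart p).coeff n = p.coeff (n * 2) :=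
  coeff_contract two_ne_zero p n

theorem coeff_oddPart (p : R[X]) (n : ℕ) : (oddPart p).coeff n = p.coeff (n * 2 + 1) := by
  rw [oddPart, coeff_contract two_ne_zero, coeff_divX]

theorem coeff_expand_two_mul_two_add_one (p : R[X]) (n : ℕ) :
    (expand R 2 p).coeff (n * 2 + 1) = 0 := by
  rw [coeff_expand two_pos, if_neg (by lia)]

theorem coeff_X_mul_expand_two_mul_two (p : R[X]) (n : ℕ) :
    (X * expand R 2 p).coeff (n * 2) = 0 := by
  cases n with
  | zero => simp
  | succ n => rw [show (n + 1) * 2 = n * 2 + 1 + 1 by ring, coeff_X_mul,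
      coeff_expand_two_mul_two_add_one]

theorem evenPart_expand_add_X_mul_expand (A B : R[X]) :
    evenPart (expand R 2 A + X * expand R 2 B) = A := by
  ext n
  rw [coeff_evenPart, coeff_add, coeff_expand_mul two_pos, coeff_X_mul_expand_two_mul_two, add_zero]

theorem oddPart_expand_add_X_mul_expand (A B : R[X]) :
    oddPart (expand R 2 A + X * expand R 2 B) = B := by
  ext n
  rw [coeff_oddPart, coeff_add, coeff_expand_two_mul_two_add_one, coeff_X_mul,
    coeff_expand_mul two_pos, zero_add]

theorem expand_evenPart_add_X_mul_expand_oddPart (p : R[X]) :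
    expand R 2 (evenPart p) + X * expand R 2 (oddPart p) = p := by
  ext n
  obtain ⟨k, rfl | rfl⟩ := Nat.even_or_odd' n
  · rw [mul_comm 2 k, coeff_add, coeff_expand_mul two_pos, coeff_X_mul_expand_two_mul_two,
      coeff_evenPart, add_zero]
  · rw [mul_comm 2 k, coeff_add, coeff_expand_two_mul_two_add_one, coeff_X_mul,
      coeff_expand_mul two_pos, coeff_oddPart, zero_add]

theorem expand_two_dvd_iff {G p : R[X]} :
    expand R 2 G ∣ p ↔ G ∣ evenPart p ∧ G ∣ oddPart p := by
  constructor
  · rintro ⟨r, rfl⟩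
    have hsplit : expand R 2 G * r =
        expand R 2 (G * evenPart r) + X * expand R 2 (G * oddPart r) := by
      nth_rw 1 [← expand_evenPart_add_X_mul_expand_oddPart r]
      simp only [map_mul]
      ring
    rw [hsplit, evenPart_expand_add_X_mul_expand, oddPart_expand_add_X_mul_expand]
    exact ⟨dvd_mul_right _ _, dvd_mul_right _ _⟩
  · rintro ⟨heven, hodd⟩
    rw [← expand_evenPart_add_X_mul_expand_oddPart p]
    exact dvd_add ((expand_dvd_expand_iff two_ne_zero).2 heven)
      (dvd_mul_of_dvd_right ((expand_dvd_expand_iff two_ne_zero).2 hodd) X)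

end Parity

section Graeffe

variable {R : Type*} [CommRing R]

theorem expand_two_comp_neg_X (p : R[X]) : (expand R 2 p).comp (-X) = expand R 2 p := by
  rw [expand_eq_comp_X_pow, comp_assoc, X_pow_comp, neg_sq]

theorem expand_two_dvd_comp_neg_X_iff {G p : R[X]} :
    expand R 2 G ∣ p.comp (-X) ↔ expand R 2 G ∣ p := by
  rw [dvd_comp_neg_X_iff, expand_two_comp_neg_X]

theorem isUnit_comp_neg_X_iff {p : R[X]} : IsUnit (p.comp (-X)) ↔ IsUnit p :=
  isUnit_map_iff algEquivAevalNegX p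

/-- The Graeffe transform of `p`: the norm `p(X) p(-X)` of `p` over `R[X²]`, written as a polynomial
in `X²`. -/
noncomputable def graeffe (p : R[X]) : R[X] := evenPart p ^ 2 - X * oddPart p ^ 2

theorem graeffe_expand_add_X_mul_expand (A B : R[X]) :
    graeffe (expand R 2 A + X * expand R 2 B) = A ^ 2 - X * B ^ 2 := by
  rw [graeffe, evenPart_expand_add_X_mul_expand, oddPart_expand_add_X_mul_expand]

theorem expand_graeffe (p : R[X]) : expand R 2 (graeffe p) = p * p.comp (-X) := by
  obtain ⟨A, B, rfl⟩ : ∃ A B, p = expand R 2 A + X * expand R 2 B :=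
    ⟨_, _, (expand_evenPart_add_X_mul_expand_oddPart p).symm⟩
  rw [graeffe_expand_add_X_mul_expand]
  simp only [map_sub, map_mul, map_pow, expand_X, add_comp, mul_comp, X_comp,
    expand_two_comp_neg_X]
  ring

theorem graeffe_mul (p q : R[X]) : graeffe (p * q) = graeffe p * graeffe q := by
  apply expand_injective two_pos
  simp only [map_mul, expand_graeffe, mul_comp]
  ring

theorem graeffe_expand_two (p : R[X]) : graeffe (expand R 2 p) = p ^ 2 := by
  apply expand_injective two_pos
  rw [expand_graeffe, expand_two_comp_neg_X, map_pow, sq]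

theorem expand_two_dvd_of_dvd_graeffe {G p : R[X]} (hG : Prime (expand R 2 G))
    (h : G ∣ graeffe p) : expand R 2 G ∣ p := by
  have hdvd : expand R 2 G ∣ p * p.comp (-X) := by
    rwa [← expand_graeffe, expand_dvd_expand_iff two_ne_zero]
  exact (hG.dvd_or_dvd hdvd).elim id expand_two_dvd_comp_neg_X_iff.1

theorem dvd_graeffe_sq_add_X_mul_graeffe_sq {G A B : R[X]}
    (h : expand R 2 G ∣ A ^ 2 - X * B ^ 2) : G ∣ graeffe A ^ 2 + X * graeffe B ^ 2 := by
  have hconj : expand R 2 G ∣ A.comp (-X) ^ 2 + X * B.comp (-X) ^ 2 := by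
    simpa only [sub_comp, mul_comp, pow_comp, X_comp, neg_mul, sub_neg_eq_add] using
      expand_two_dvd_comp_neg_X_iff.2 h
  rw [← expand_dvd_expand_iff two_ne_zero]
  have hcombination : expand R 2 (graeffe A ^ 2 + X * graeffe B ^ 2) =
      A.comp (-X) ^ 2 * (A ^ 2 - X * B ^ 2) +
        X * B ^ 2 * (A.comp (-X) ^ 2 + X * B.comp (-X) ^ 2) := by
    simp only [map_add, map_mul, map_pow, expand_X, expand_graeffe]
    ring
  rw [hcombination]
  exact dvd_add (dvd_mul_of_dvd_right h _) (dvd_mul_of_dvd_right hconj _)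

theorem expand_two_dvd_of_dvd_graeffe_of_prime_expand_expand {H g : R[X]}
    (hF : Prime (expand R 2 (expand R 2 H))) (h : expand R 2 (expand R 2 H) ∣ graeffe g) :
    expand R 2 (expand R 2 (expand R 2 H)) ∣ g := by
  set P := graeffe (evenPart g)
  set Q := graeffe (oddPart g)
  have hneg : expand R 2 H ∣ P ^ 2 + X * Q ^ 2 := dvd_graeffe_sq_add_X_mul_graeffe_sq h
  have hpos : expand R 2 H ∣ P.comp (-X) ^ 2 - X * Q.comp (-X) ^ 2 := by
    simpa only [add_comp, mul_comp, pow_comp, X_comp, neg_mul, ← sub_eq_add_neg] using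
      expand_two_dvd_comp_neg_X_iff.2 hneg
  rw [← graeffe_expand_add_X_mul_expand] at hpos
  obtain ⟨hP, hQ⟩ := expand_two_dvd_iff.1 (expand_two_dvd_of_dvd_graeffe hF hpos)
  rw [evenPart_expand_add_X_mul_expand, expand_two_dvd_comp_neg_X_iff] at hP
  rw [oddPart_expand_add_X_mul_expand, expand_two_dvd_comp_neg_X_iff] at hQ
  exact expand_two_dvd_iff.2
    ⟨expand_two_dvd_of_dvd_graeffe hF hP, expand_two_dvd_of_dvd_graeffe hF hQ⟩

end Graeffe

section Domain

variable {R : Type*} [CommRing R] [IsDomain R]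

theorem isUnit_expand_iff {n : ℕ} (hn : 0 < n) {p : R[X]} : IsUnit (expand R n p) ↔ IsUnit p :=
  have := isLocalHom_expand R hn
  isUnit_map_iff (expand R n) p

theorem isUnit_graeffe_iff {p : R[X]} : IsUnit (graeffe p) ↔ IsUnit p := by
  rw [← isUnit_expand_iff two_pos, expand_graeffe, IsUnit.mul_iff, isUnit_comp_neg_X_iff, and_self]

theorem natDegree_graeffe (p : R[X]) : (graeffe p).natDegree = p.natDegree := by
  have hmul : (graeffe p).natDegree * 2 = (p * p.comp (-X)).natDegree := by
    rw [← expand_graeffe, natDegree_expand]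
  have hnorm : (p * p.comp (-X)).natDegree = p.natDegree * 2 := by
    rcases eq_or_ne p 0 with rfl | hp
    · simp
    · rw [natDegree_mul hp (comp_neg_X_eq_zero_iff.not.2 hp), natDegree_comp, natDegree_neg,
        natDegree_X, mul_one, mul_two]
  lia

theorem leadingCoeff_graeffe (p : R[X]) :
    (graeffe p).leadingCoeff = (-1) ^ p.natDegree * p.leadingCoeff ^ 2 := by
  rw [← leadingCoeff_expand two_pos, expand_graeffe, leadingCoeff_mul, comp_neg_X_leadingCoeff_eq]
  ring

theorem prime_expand_two_of_forall_dvd_graeffe {F : R[X]} (hF : Prime F)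
    (h : ∀ g, F ∣ graeffe g → expand R 2 F ∣ g) : Prime (expand R 2 F) := by
  refine ⟨(expand_ne_zero two_pos).2 hF.ne_zero, (isUnit_expand_iff two_pos).not.2 hF.not_isUnit,
    fun g k hgk => ?_⟩
  have hsq : F ^ 2 ∣ graeffe g * graeffe k := by
    obtain ⟨r, hr⟩ := hgk
    exact ⟨graeffe r, by rw [← graeffe_mul, hr, graeffe_mul, graeffe_expand_two]⟩
  exact (hF.dvd_or_dvd (dvd_of_mul_left_dvd (sq F ▸ hsq))).imp (h g) (h k)

theorem prime_expand_two_pow_of_prime_expand_four {H : R[X]} (hH : Prime (expand R 4 H)) (n : ℕ) :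
    Prime (expand R (2 ^ (n + 2)) H) := by
  induction n with
  | zero => exact hH
  | succ n ih =>
    have hpow : 2 ^ (n + 2) = 2 * (2 * 2 ^ n) := by ring
    rw [pow_succ', ← expand_expand]
    refine prime_expand_two_of_forall_dvd_graeffe ih fun g hg => ?_
    rw [hpow, ← expand_expand, ← expand_expand] at ih hg ⊢
    exact expand_two_dvd_of_dvd_graeffe_of_prime_expand_expand ih hg

theorem not_irreducible_expand_two_iff_exists_associated_graeffe {F : R[X]} (hF : Prime F) :
    ¬Irreducible (expand R 2 F) ↔ ∃ g, Associated (graeffe g) F := by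
  constructor
  · intro hred
    have hnonunit : ¬IsUnit (expand R 2 F) := (isUnit_expand_iff two_pos).not.2 hF.not_isUnit
    obtain ⟨g, k, hg, hk, hgk⟩ := (irreducible_or_factor hnonunit).resolve_left hred
    refine ⟨g, associated_of_mul_eq_prime_sq hF (isUnit_graeffe_iff.not.2 hg)
      (isUnit_graeffe_iff.not.2 hk) ?_⟩
    rw [← graeffe_mul, ← hgk, graeffe_expand_two]
  · rintro ⟨g, hg⟩ hirr
    have hfactor : Irreducible (g * g.comp (-X)) := by
      rw [← expand_graeffe]
      exact (hg.map (expand R 2)).irreducible_iff.2 hirr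
    have hunit : IsUnit g :=
      (hfactor.isUnit_or_isUnit rfl).elim id isUnit_comp_neg_X_iff.1
    exact hF.not_isUnit (hg.isUnit (isUnit_graeffe_iff.2 hunit))

theorem exists_associated_graeffe_iff {F : R[X]} :
    (∃ g, Associated (graeffe g) F) ↔
      ∃ (S₀ S₁ : R[X]) (u : Rˣ), (∃ c : R, (u : R) * F.leadingCoeff = c ^ 2) ∧
        C ((-1 : R) ^ F.natDegree * (u : R)) * F = S₀ ^ 2 - X * S₁ ^ 2 := by
  constructor
  · rintro ⟨g, hg⟩
    obtain ⟨w, hw⟩ := hg.symm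
    obtain ⟨_, ⟨v, rfl⟩, hvw⟩ := Polynomial.isUnit_iff.1 w.isUnit
    have hgF : C (v : R) * F = graeffe g := by rw [hvw, mul_comm, hw]
    have hdeg : F.natDegree = g.natDegree := by
      rw [← natDegree_graeffe g, ← hgF, natDegree_C_mul v.ne_zero]
    have hlead : v * F.leadingCoeff = (-1) ^ F.natDegree * g.leadingCoeff ^ 2 := by
      rw [hdeg, ← leadingCoeff_graeffe g, ← hgF, leadingCoeff_mul, leadingCoeff_C]
    have hsign : (-1 : R) ^ F.natDegree * (-1) ^ F.natDegree = 1 := by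
      rw [← mul_pow, neg_one_mul, neg_neg, one_pow]
    refine ⟨evenPart g, oddPart g, (-1) ^ F.natDegree * v, ⟨g.leadingCoeff, ?_⟩, ?_⟩ <;> push_cast
    · rw [mul_assoc, hlead, ← mul_assoc, hsign, one_mul]
    · rw [← mul_assoc, hsign, one_mul, hgF, graeffe]
  · rintro ⟨S₀, S₁, u, -, h⟩
    have hunit : IsUnit (C ((-1 : R) ^ F.natDegree * (u : R))) :=
      ((isUnit_neg_one.pow _).mul u.isUnit).map C
    refine ⟨expand R 2 S₀ + X * expand R 2 S₁, ?_⟩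
    rw [graeffe_expand_add_X_mul_expand, ← h]
    exact associated_unit_mul_left F _ hunit

end Domain

section Decomposition

variable {R : Type*} [CommRing R] [IsDomain R] [DecompositionMonoid R[X]]

theorem not_irreducible_expand_two_iff {F : R[X]} (hF : Irreducible F) :
    ¬Irreducible (expand R 2 F) ↔
      ∃ (S₀ S₁ : R[X]) (u : Rˣ), (∃ c : R, (u : R) * F.leadingCoeff = c ^ 2) ∧
        C ((-1 : R) ^ F.natDegree * (u : R)) * F = S₀ ^ 2 - X * S₁ ^ 2 :=
  (not_irreducible_expand_two_iff_exists_associated_graeffe hF.prime).trans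
    exists_associated_graeffe_iff

theorem irreducible_expand_two_pow_iff (f : R[X]) {s : ℕ} (hs : 1 ≤ s) :
    Irreducible (expand R (2 ^ s) f) ↔
      Irreducible (expand R 2 f) ∧ (2 ≤ s → Irreducible (expand R 2 (expand R 2 f))) := by
  obtain rfl | ⟨n, rfl⟩ : s = 1 ∨ ∃ n, s = n + 2 := by
    rcases hs.eq_or_lt with rfl | h
    exacts [.inl rfl, .inr (Nat.exists_eq_add_of_le' h)]
  · simp
  rw [expand_expand]
  constructor
  · intro h
    rw [pow_add, ← expand_expand] at h
    have hfour : Irreducible (expand R 4 f) := of_irreducible_expand (by positivity) h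
    refine ⟨of_irreducible_expand two_ne_zero ?_, fun _ => hfour⟩
    rwa [expand_expand]
  · rintro ⟨-, h⟩
    exact (prime_expand_two_pow_of_prime_expand_four (h (by lia)).prime n).irreducible

theorem stmt10_general (f : R[X]) (hf : Irreducible f) (s : ℕ) (hs : 1 ≤ s) :
    ¬ Irreducible (f.comp (X ^ 2 ^ s)) ↔
      ∃ (S₀ S₁ : R[X]) (u : Rˣ),
        (∃ c : R, (u : R) * f.leadingCoeff = c ^ 2) ∧
          (C ((-1 : R) ^ f.natDegree * (u : R)) * f = S₀ ^ 2 - X * S₁ ^ 2 ∨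
            (2 ≤ s ∧ C ((u : R)) * f.comp (X ^ 2) = S₀ ^ 2 - X * S₁ ^ 2)) := by
  rw [← expand_eq_comp_X_pow, ← expand_eq_comp_X_pow, irreducible_expand_two_pow_iff f hs]
  have hsecond (hf₂ : Irreducible (expand R 2 f)) :
      ¬Irreducible (expand R 2 (expand R 2 f)) ↔
        ∃ (S₀ S₁ : R[X]) (u : Rˣ), (∃ c : R, (u : R) * f.leadingCoeff = c ^ 2) ∧
          C (u : R) * expand R 2 f = S₀ ^ 2 - X * S₁ ^ 2 := by
    simpa only [natDegree_expand, leadingCoeff_expand two_pos, pow_mul', neg_one_sq, one_pow,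
      one_mul] using not_irreducible_expand_two_iff hf₂
  simp only [and_or_left, exists_or, and_left_comm (b := 2 ≤ s), exists_and_left]
  rw [← not_irreducible_expand_two_iff hf]
  by_cases hf₂ : Irreducible (expand R 2 f)
  · rw [← hsecond hf₂]
    tauto
  · exact iff_of_true (fun h => hf₂ h.1) (.inl hf₂)

end Decomposition

theorem stmt10 {Z : Type*} [CommRing Z] [IsDomain Z] [UniqueFactorizationMonoid Z]
    (f : Polynomial Z) (hf : Irreducible f) (hdeg : 0 < f.natDegree)
    (s : ℕ) (hs : 1 ≤ s) :
    ¬ Irreducible (f.comp (X ^ 2 ^ s)) ↔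
      ∃ (S₀ S₁ : Polynomial Z) (u : Zˣ),
        (∃ c : Z, (u : Z) * f.leadingCoeff = c ^ 2) ∧
          (C ((-1 : Z) ^ f.natDegree * (u : Z)) * f = S₀ ^ 2 - X * S₁ ^ 2 ∨
            (2 ≤ s ∧ C ((u : Z)) * f.comp (X ^ 2) = S₀ ^ 2 - X * S₁ ^ 2)) :=
  stmt10_general f hf s hs
end

section
/- Let Z be a unique factorization domain, let f ∈ Z[X] be irreducible in Z[X] of positive degree with leading coefficient a, and let s ≥ 1 be an integer. Then f(X^{3^s}) is not irreducible in Z[X] if and only if there exist polynomials S_0, S_1, S_2 ∈ Z[X] and a unit u ∈ Zˣ with u·a a cube in Z such that u·f(X) = S_0(X)^3 + X·S_1(X)^3 + X^2·S_2(X)^3 − 3·X·S_0(X)·S_1(X)·S_2(X). -/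
open Polynomial

/-!
Write a polynomial `G` as `G₀(X³) + X G₁(X³) + X² G₂(X³)`. The polynomial
`N G = G₀³ + X G₁³ + X² G₂³ - 3 X G₀ G₁ G₂`, evaluated at `X³`, is the norm of `G` from `Z[X]` down
to `Z[X³]`. Hence `N G` is multiplicative in `G`, has the same degree as `G`, has as leading
coefficient the cube of that of `G`, and satisfies `G ∣ (N G)(X³)` and `N (f(X³)) = f³`.

If `u f = N G`, then `G` is a factor of `f(X³)` of degree `deg f`, so `f(X³)` is reducible, and a
fortiori so is `f(X^{3^s})`. Conversely, let `x` be a root of `f` over the fraction field `K`. By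
Capelli's theorem, reducibility of `f(X^{3^s})` makes `x` a cube `b³` in `K(x)`. The minimal
polynomial of `b` then has degree at most `deg f` and divides `f(X³)`, and by Gauss's lemma it comes
from a factor `g` of `f(X³)` over `Z`. Taking norms, `N g` divides `f³`; since `f` is prime and
`0 < deg (N g) ≤ deg f`, the polynomials `N g` and `f` are associated.
-/

section Degree

variable {R : Type*} [CommRing R] [IsDomain R]

lemma natDegree_eq_natDegree_of_associated {F G : R[X]} (h : Associated F G) :
    F.natDegree = G.natDegree :=
  natDegree_eq_of_degree_eq (degree_eq_degree_of_associated h)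

lemma not_irreducible_of_dvd_of_natDegree_lt {F G : R[X]} (hGF : G ∣ F)
    (hG : G.natDegree ≠ 0) (hlt : G.natDegree < F.natDegree) : ¬ Irreducible F := by
  intro hF
  rcases hF.dvd_iff.1 hGF with hunit | hassoc
  · exact hG (natDegree_eq_zero_of_isUnit hunit)
  · exact hlt.ne' (natDegree_eq_natDegree_of_associated hassoc)

end Degree

section Multisection

variable {R : Type*} [CommSemiring R] {p i : ℕ}

/-- The polynomial whose `n`-th coefficient is the coefficient of `G` in degree `n * p + i`. For
`i < p` these are the components of `G` in the basis `1, X, …, X ^ (p - 1)` of `R[X]` over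
`R[X ^ p]`. -/
noncomputable def multisection (p i : ℕ) (G : R[X]) : R[X] :=
  contract p (divX^[i] G)

/-- The polynomial `∑ i, X ^ i * S i (X ^ p)`, which has the `S i` as its `p` multisections. -/
noncomputable def interleave (S : Fin p → R[X]) : R[X] :=
  ∑ i : Fin p, X ^ (i : ℕ) * expand R p (S i)

/-- The sum of the terms of `G` whose degree is congruent to `i` modulo `p`, where `i < p`. -/
noncomputable def residuePart (p i : ℕ) (G : R[X]) : R[X] :=
  X ^ i * expand R p (multisection p i G)

lemma coeff_iterate_divX (G : R[X]) (i n : ℕ) : (divX^[i] G).coeff n = G.coeff (n + i) := by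
  induction i generalizing n with
  | zero => rfl
  | succ i ih => rw [Function.iterate_succ_apply', coeff_divX, ih, add_right_comm, add_assoc]

lemma coeff_multisection (hp : p ≠ 0) (i : ℕ) (G : R[X]) (n : ℕ) :
    (multisection p i G).coeff n = G.coeff (n * p + i) := by
  rw [multisection, coeff_contract hp, coeff_iterate_divX]

lemma coeff_X_pow_mul_expand (hi : i < p) (S : R[X]) (n : ℕ) :
    (X ^ i * expand R p S).coeff n = if n % p = i then S.coeff (n / p) else 0 := by
  have hp : 0 < p := Nat.zero_lt_of_lt hi
  split_ifs with hn
  · have hsplit : n = n / p * p + i := by rw [← hn, Nat.div_add_mod']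
    nth_rw 1 [hsplit]
    rw [coeff_X_pow_mul, coeff_expand_mul hp]
  · rw [coeff_X_pow_mul', coeff_expand hp]
    split_ifs with hle hdvd
    · have hmod : i % p = n % p := (Nat.modEq_iff_dvd' hle).2 hdvd
      exact absurd (hmod.symm.trans (Nat.mod_eq_of_lt hi)) hn
    · rfl
    · rfl

lemma coeff_interleave (S : Fin p → R[X]) (i : Fin p) (n : ℕ) :
    (interleave S).coeff (n * p + i) = (S i).coeff n := by
  have hp : 0 < p := Fin.pos i
  simp [interleave, coeff_X_pow_mul_expand, Nat.mod_eq_of_lt, Fin.val_inj, Nat.add_div_of_dvd_right,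
    Nat.div_eq_of_lt, hp]

lemma multisection_interleave (S : Fin p → R[X]) (i : Fin p) :
    multisection p i (interleave S) = S i := by
  ext n
  rw [coeff_multisection (Fin.pos i).ne', coeff_interleave]

lemma interleave_multisection (hp : p ≠ 0) (G : R[X]) :
    interleave (fun i : Fin p => multisection p i G) = G := by
  ext n
  have hmod : n % p < p := Nat.mod_lt n (Nat.pos_of_ne_zero hp)
  rw [← Nat.div_add_mod' n p]
  exact (coeff_interleave _ ⟨n % p, hmod⟩ _).trans (coeff_multisection hp _ _ _)

lemma interleave_surjective (hp : p ≠ 0) :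
    Function.Surjective (interleave : (Fin p → R[X]) → R[X]) :=
  fun G => ⟨_, interleave_multisection hp G⟩

lemma interleave_three (S : Fin 3 → R[X]) :
    interleave S = expand R 3 (S 0) + X * expand R 3 (S 1) + X ^ 2 * expand R 3 (S 2) := by
  simp [interleave, Fin.sum_univ_three]

lemma coeff_residuePart (hi : i < p) (G : R[X]) (n : ℕ) :
    (residuePart p i G).coeff n = if n % p = i then G.coeff n else 0 := by
  rw [residuePart, coeff_X_pow_mul_expand hi, coeff_multisection (Nat.ne_zero_of_lt hi)]
  split_ifs with hn
  · rw [← hn, Nat.div_add_mod']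
  · rfl

lemma natDegree_residuePart_le (hi : i < p) (G : R[X]) :
    (residuePart p i G).natDegree ≤ G.natDegree := by
  refine natDegree_le_iff_coeff_eq_zero.2 fun n hn => ?_
  rw [coeff_residuePart hi, coeff_eq_zero_of_natDegree_lt hn, ite_self]

lemma sum_residuePart (hp : p ≠ 0) (G : R[X]) : ∑ i : Fin p, residuePart p i G = G :=
  interleave_multisection hp G

end Multisection

section CubicNorm

variable {R : Type*} [CommRing R]

/-- The norm of `G` for the extension `R[X] / R[X ^ 3]`, written as a polynomial in `X ^ 3`, so that
the norm itself is `expand R 3 (cubicNorm G)`. The formula is the determinant of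
multiplication by `G` in the basis `1, X, X ^ 2`. -/
noncomputable def cubicNorm (G : R[X]) : R[X] :=
  multisection 3 0 G ^ 3 + X * multisection 3 1 G ^ 3 + X ^ 2 * multisection 3 2 G ^ 3 -
    3 * X * multisection 3 0 G * multisection 3 1 G * multisection 3 2 G

lemma cubicNorm_interleave (S : Fin 3 → R[X]) :
    cubicNorm (interleave S) =
      S 0 ^ 3 + X * S 1 ^ 3 + X ^ 2 * S 2 ^ 3 - 3 * X * S 0 * S 1 * S 2 := by
  simp only [← multisection_interleave S]
  rfl

lemma cubicNorm_expand (f : R[X]) : cubicNorm (expand R 3 f) = f ^ 3 := by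
  have hf : expand R 3 f = interleave ![f, 0, 0] := by simp [interleave_three]
  simp [hf, cubicNorm_interleave]

lemma cubicNorm_mul (G H : R[X]) : cubicNorm (G * H) = cubicNorm G * cubicNorm H := by
  obtain ⟨S, rfl⟩ := interleave_surjective three_ne_zero G
  obtain ⟨T, rfl⟩ := interleave_surjective three_ne_zero H
  have hmul : interleave S * interleave T = interleave
      ![S 0 * T 0 + X * (S 1 * T 2 + S 2 * T 1),
        S 0 * T 1 + S 1 * T 0 + X * (S 2 * T 2),
        S 0 * T 2 + S 1 * T 1 + S 2 * T 0] := by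
    simp only [interleave_three, Matrix.cons_val, map_add, map_mul, expand_X]
    ring
  simp only [hmul, cubicNorm_interleave, Matrix.cons_val]
  ring

lemma expand_cubicNorm (G : R[X]) :
    expand R 3 (cubicNorm G) =
      residuePart 3 0 G ^ 3 + residuePart 3 1 G ^ 3 + residuePart 3 2 G ^ 3 -
        3 * (residuePart 3 0 G * residuePart 3 1 G * residuePart 3 2 G) := by
  simp only [cubicNorm, residuePart, map_sub, map_add, map_mul, map_pow, map_ofNat, expand_X]
  ring

lemma dvd_expand_cubicNorm (G : R[X]) : G ∣ expand R 3 (cubicNorm G) := by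
  have hG : residuePart 3 0 G + residuePart 3 1 G + residuePart 3 2 G = G := by
    simpa only [Fin.sum_univ_three] using! sum_residuePart three_ne_zero G
  rw [expand_cubicNorm]
  generalize residuePart 3 0 G = a, residuePart 3 1 G = b, residuePart 3 2 G = c at hG ⊢
  exact ⟨a ^ 2 + b ^ 2 + c ^ 2 - a * b - b * c - c * a, by rw [← hG]; ring⟩

lemma coeff_cubicNorm_of_natDegree_le {G : R[X]} {n : ℕ} (hG : G.natDegree ≤ n) :
    (cubicNorm G).coeff n = G.coeff n ^ 3 := by
  have hdeg {i : ℕ} (hi : i < 3) : (residuePart 3 i G).natDegree ≤ n :=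
    (natDegree_residuePart_le hi G).trans hG
  have hcube {i : ℕ} (hi : i < 3) :
      (residuePart 3 i G ^ 3).coeff (3 * n) = (residuePart 3 i G).coeff n ^ 3 :=
    coeff_pow_of_natDegree_le (hdeg hi)
  have hmixed : (residuePart 3 0 G * residuePart 3 1 G * residuePart 3 2 G).coeff (3 * n) =
      (residuePart 3 0 G).coeff n * (residuePart 3 1 G).coeff n * (residuePart 3 2 G).coeff n := by
    have h0 := hdeg (i := 0) (by norm_num)
    have h1 := hdeg (i := 1) (by norm_num)
    have h2 := hdeg (i := 2) (by norm_num)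
    rw [show 3 * n = n + n + n by ring,
      coeff_mul_add_eq_of_natDegree_le (natDegree_mul_le_of_le h0 h1) h2,
      coeff_mul_add_eq_of_natDegree_le h0 h1]
  rw [← coeff_expand_mul' three_pos, expand_cubicNorm, coeff_sub, coeff_add, coeff_add,
    coeff_ofNat_mul, hmixed, hcube (by norm_num), hcube (by norm_num), hcube (by norm_num)]
  -- Only one residue part has a term of degree `n`, so the mixed product vanishes.
  obtain h | h | h : n % 3 = 0 ∨ n % 3 = 1 ∨ n % 3 = 2 := by lia
  all_goals simp [coeff_residuePart, h]

lemma natDegree_cubicNorm [IsReduced R] (G : R[X]) : (cubicNorm G).natDegree = G.natDegree := by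
  apply le_antisymm
  · refine natDegree_le_iff_coeff_eq_zero.2 fun n hn => ?_
    rw [coeff_cubicNorm_of_natDegree_le hn.le, coeff_eq_zero_of_natDegree_lt hn,
      zero_pow three_ne_zero]
  · rcases eq_or_ne G 0 with rfl | hG
    · simp
    · apply le_natDegree_of_ne_zero
      rw [coeff_cubicNorm_of_natDegree_le le_rfl]
      exact mt eq_zero_of_pow_eq_zero (leadingCoeff_ne_zero.2 hG)

lemma leadingCoeff_cubicNorm [IsReduced R] (G : R[X]) :
    (cubicNorm G).leadingCoeff = G.leadingCoeff ^ 3 := by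
  rw [leadingCoeff, natDegree_cubicNorm, coeff_cubicNorm_of_natDegree_le le_rfl, leadingCoeff]

lemma associated_cubicNorm_of_dvd_expand [IsDomain R] {f g : R[X]} (hf : Prime f)
    (hgf : g ∣ expand R 3 f) (hg : g.natDegree ≠ 0) (hdeg : g.natDegree ≤ f.natDegree) :
    Associated f (cubicNorm g) := by
  obtain ⟨h, hh⟩ := hgf
  have hdvd : cubicNorm g ∣ f ^ 3 := ⟨cubicNorm h, by rw [← cubicNorm_expand, hh, cubicNorm_mul]⟩
  obtain ⟨k, -, hk⟩ := (dvd_prime_pow hf 3).1 hdvd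
  have hdegk : g.natDegree = k * f.natDegree := by
    rw [← natDegree_cubicNorm, natDegree_eq_natDegree_of_associated hk, natDegree_pow]
  obtain rfl : k = 1 := by
    have hk0 : k ≠ 0 := by
      rintro rfl
      exact hg (hdegk.trans (zero_mul _))
    have hk1 : k ≤ 1 :=
      Nat.le_of_mul_le_mul_right (by rwa [one_mul, ← hdegk]) (hdeg.trans_lt' hg.bot_lt)
    lia
  simpa using hk.symm

lemma not_irreducible_expand_of_associated_cubicNorm [IsDomain R] {f G : R[X]}
    (hf : f.natDegree ≠ 0) (hfG : Associated f (cubicNorm G)) : ¬ Irreducible (expand R 3 f) := by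
  have hdeg : G.natDegree = f.natDegree := by
    rw [natDegree_eq_natDegree_of_associated hfG, natDegree_cubicNorm]
  have hdvd : G ∣ expand R 3 f := (dvd_expand_cubicNorm G).trans (hfG.symm.map (expand R 3)).dvd
  refine not_irreducible_of_dvd_of_natDegree_lt hdvd (hdeg ▸ hf) ?_
  rw [natDegree_expand, hdeg]
  lia

end CubicNorm

section Capelli

variable {K : Type*} [Field K] {p : ℕ}

open IntermediateField in
lemma exists_irreducible_dvd_expand_of_monic (hp : p.Prime) (hp2 : p ≠ 2) {F : K[X]}
    (hmonic : F.Monic) (hF : Irreducible F) {s : ℕ}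
    (hred : ¬ Irreducible (expand K (p ^ s) F)) :
    ∃ G, Irreducible G ∧ G ∣ expand K p F ∧ G.natDegree ≤ F.natDegree := by
  by_contra! hno
  refine hred (irreducible_comp hmonic (monic_X_pow _) hF fun E _ _ x hx => ?_)
  rw [Polynomial.map_pow, map_X]
  refine X_pow_sub_C_irreducible_of_prime_pow hp hp2 s fun b hb => ?_
  have hxint : IsIntegral K x := minpoly.ne_zero_iff.1 (hx ▸ hF.ne_zero)
  have : FiniteDimensional K K⟮x⟯ := adjoin.finiteDimensional hxint
  have hroot : aeval b (expand K p F) = 0 := by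
    rw [expand_aeval, hb, ← hx, ← minpoly_gen K x, minpoly.aeval]
  have hle : (minpoly K b).natDegree ≤ F.natDegree := by
    simpa only [adjoin.finrank hxint, hx] using minpoly.natDegree_le (A := K) b
  exact (hno _ (minpoly.irreducible (IsIntegral.of_finite K b)) (minpoly.dvd K b hroot)).not_ge hle

lemma exists_irreducible_dvd_expand (hp : p.Prime) (hp2 : p ≠ 2) {F : K[X]}
    (hF : Irreducible F) {s : ℕ} (hred : ¬ Irreducible (expand K (p ^ s) F)) :
    ∃ G, Irreducible G ∧ G ∣ expand K p F ∧ G.natDegree ≤ F.natDegree := by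
  classical
  have hassoc : Associated (normalize F) F := normalize_associated F
  obtain ⟨G, hG, hdvd, hle⟩ := exists_irreducible_dvd_expand_of_monic hp hp2
    (monic_normalize hF.ne_zero) (hassoc.symm.irreducible hF)
    (mt (hassoc.map (expand K (p ^ s))).irreducible hred)
  exact ⟨G, hG, hdvd.trans (hassoc.map (expand K p)).dvd,
    hle.trans_eq (natDegree_eq_natDegree_of_associated hassoc)⟩

end Capelli

section Gauss

lemma isPrimitive_expand_s11 {R : Type*} [CommSemiring R] {p : ℕ} (hp : 0 < p) {f : R[X]}
    (hf : f.IsPrimitive) : (expand R p f).IsPrimitive := by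
  intro r hr
  refine hf r ((C_dvd_iff_dvd_coeff r f).2 fun i => ?_)
  rw [← coeff_expand_mul hp]
  exact (C_dvd_iff_dvd_coeff r _).1 hr _

variable {Z : Type*} [CommRing Z] [IsDomain Z] [UniqueFactorizationMonoid Z]

lemma exists_dvd_associated_map_of_irreducible_dvd_map {K : Type*} [Field K] [Algebra Z K]
    [IsFractionRing Z K] {P : Z[X]} (hP : P.IsPrimitive) {G : K[X]} (hG : Irreducible G)
    (hGP : G ∣ P.map (algebraMap Z K)) :
    ∃ g, g ∣ P ∧ Associated G (g.map (algebraMap Z K)) := by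
  obtain ⟨factors, hirr, hprod⟩ := WfDvdMonoid.exists_factors P hP.ne_zero
  have hdvd : G ∣ (factors.map (mapRingHom (algebraMap Z K))).prod := by
    rw [Multiset.prod_hom]
    exact hGP.trans (hprod.symm.map (mapRingHom (algebraMap Z K))).dvd
  obtain ⟨g, hmem, hGg⟩ := hG.prime.exists_mem_multiset_map_dvd hdvd
  have hgP : g ∣ P := (Multiset.dvd_prod hmem).trans hprod.dvd
  have hg : Irreducible (g.map (algebraMap Z K)) :=
    (isPrimitive_of_dvd hP hgP).irreducible_iff_irreducible_map_fraction_map.1 (hirr g hmem)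
  exact ⟨g, hgP, hG.associated_of_dvd hg hGg⟩

lemma exists_dvd_expand_natDegree_le {p : ℕ} (hp : p.Prime) (hp2 : p ≠ 2) {f : Z[X]}
    (hf : Irreducible f) (hdeg : f.natDegree ≠ 0) {s : ℕ}
    (hred : ¬ Irreducible (expand Z (p ^ s) f)) :
    ∃ g, g ∣ expand Z p f ∧ g.natDegree ≠ 0 ∧ g.natDegree ≤ f.natDegree := by
  let K := FractionRing Z
  have hprim : f.IsPrimitive := hf.isPrimitive hdeg
  have hirr : Irreducible (f.map (algebraMap Z K)) :=
    hprim.irreducible_iff_irreducible_map_fraction_map.1 hf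
  have hredK : ¬ Irreducible (expand K (p ^ s) (f.map (algebraMap Z K))) := by
    have hprim_expand : (expand Z (p ^ s) f).IsPrimitive :=
      isPrimitive_expand_s11 (pow_pos hp.pos s) hprim
    rwa [← map_expand, ← hprim_expand.irreducible_iff_irreducible_map_fraction_map]
  obtain ⟨G, hG, hGdvd, hGle⟩ := exists_irreducible_dvd_expand hp hp2 hirr hredK
  rw [← map_expand] at hGdvd
  obtain ⟨g, hg, hassoc⟩ :=
    exists_dvd_associated_map_of_irreducible_dvd_map (isPrimitive_expand_s11 hp.pos hprim) hG hGdvd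
  have hinj := IsFractionRing.injective Z K
  have hgG : g.natDegree = G.natDegree := by
    rw [natDegree_eq_natDegree_of_associated hassoc, natDegree_map_eq_of_injective hinj]
  rw [natDegree_map_eq_of_injective hinj] at hGle
  exact ⟨g, hg, hgG ▸ hG.natDegree_pos.ne', hgG ▸ hGle⟩

end Gauss

theorem stmt11 {Z : Type*} [CommRing Z] [IsDomain Z] [UniqueFactorizationMonoid Z]
    (f : Polynomial Z) (hf : Irreducible f) (hdeg : 0 < f.natDegree)
    (s : ℕ) (hs : 1 ≤ s) :
    ¬ Irreducible (f.comp (X ^ 3 ^ s)) ↔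
      ∃ (S₀ S₁ S₂ : Polynomial Z) (u : Zˣ),
        (∃ c : Z, (u : Z) * f.leadingCoeff = c ^ 3) ∧
          C ((u : Z)) * f =
            S₀ ^ 3 + X * S₁ ^ 3 + X ^ 2 * S₂ ^ 3 - 3 * X * S₀ * S₁ * S₂ := by
  rw [← expand_eq_comp_X_pow]
  constructor
  · intro hred
    obtain ⟨g, hgf, hg, hle⟩ :=
      exists_dvd_expand_natDegree_le Nat.prime_three (by norm_num) hf hdeg.ne' hred
    obtain ⟨v, hv⟩ := associated_cubicNorm_of_dvd_expand hf.prime hgf hg hle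
    obtain ⟨_, ⟨u, rfl⟩, huv⟩ := Polynomial.isUnit_iff.1 v.isUnit
    have hnorm : C (u : Z) * f = cubicNorm g := by rw [huv, mul_comm, hv]
    refine ⟨multisection 3 0 g, multisection 3 1 g, multisection 3 2 g, u, ⟨g.leadingCoeff, ?_⟩,
      hnorm⟩
    rw [← leadingCoeff_cubicNorm, ← hnorm, leadingCoeff_mul, leadingCoeff_C]
  · rintro ⟨S₀, S₁, S₂, u, -, hnorm⟩
    have hassoc : Associated f (cubicNorm (interleave ![S₀, S₁, S₂])) := by
      simp only [cubicNorm_interleave, Matrix.cons_val, ← hnorm]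
      exact associated_unit_mul_right f _ (isUnit_C.2 u.isUnit)
    obtain ⟨t, rfl⟩ := Nat.exists_eq_add_of_le' hs
    rw [pow_succ, expand_mul]
    exact mt (of_irreducible_expand (pow_ne_zero t three_ne_zero))
      (not_irreducible_expand_of_associated_cubicNorm hdeg.ne' hassoc)
end

section
/- Let Z be a unique factorization domain of characteristic p, where p is a prime number, and let f ∈ Z[X] be irreducible in Z[X] of positive degree. Then f(X^p) is not irreducible in Z[X] if and only if there exist a unit u ∈ Zˣ and an irreducible polynomial P ∈ Z[X] such that u·f(X^p) = P(X)^p. -/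
open Polynomial

/-!
Write `g = f(X^p)`. Since `a ^ p = aᶠ(X^p)`, where `aᶠ` is `a` with the Frobenius map applied to its
coefficients, a divisor `a` of `g` satisfies `aᶠ ∣ f ^ p`; as `f` is prime, `a ^ p` is then
associated to a power `g ^ i`. If `g` is a product of two nonunits, one of them being `a`, then
`0 < i < p`, so a Bézout relation `m * i = k * p + 1` makes `a ^ m / g ^ k` a `p`-th root of `g` up
to a unit, and it lies in `Z[X]` because `Z[X]` is integrally closed. A factor `c` of this root `P`
has `c ^ p` associated to a power of `P ^ p`, which forces the factorization to be trivial.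
-/

theorem pos_of_pow_associated_pow {M : Type*} [CommMonoid M] {a g : M} {n i : ℕ} (hn : n ≠ 0)
    (ha : ¬IsUnit a) (h : Associated (a ^ n) (g ^ i)) : 0 < i := by
  refine Nat.pos_of_ne_zero fun hi ↦ ha ?_
  rwa [hi, pow_zero, associated_one_iff_isUnit, isUnit_pow_iff hn] at h

section Cancel

variable {M : Type*} [CommMonoidWithZero M] [IsCancelMulZero M] {a b g P : M} {n i : ℕ}

theorem lt_of_pow_associated_mul_pow (hn : n ≠ 0) (ha : a ≠ 0) (hb : ¬IsUnit b)
    (h : Associated (a ^ n) ((a * b) ^ i)) : i < n := by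
  by_contra! hni
  have hdvd : a ^ n * b ^ n ∣ a ^ n * 1 := by
    rw [← mul_pow, mul_one]
    exact (pow_dvd_pow _ hni).trans h.symm.dvd
  have hbn : IsUnit (b ^ n) :=
    isUnit_of_dvd_one ((mul_dvd_mul_iff_left (pow_ne_zero n ha)).1 hdvd)
  exact hb ((isUnit_pow_iff hn).1 hbn)

theorem irreducible_of_pow_associated (hn : n ≠ 0) (hg0 : g ≠ 0) (hg : ¬IsUnit g)
    (hdvd : ∀ a, a ∣ g → ∃ i, Associated (a ^ n) (g ^ i)) (hP : Associated (P ^ n) g) :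
    Irreducible P := by
  refine ⟨fun hPu ↦ hg (hP.isUnit (hPu.pow n)), ?_⟩
  rintro c d rfl
  by_contra! ⟨hc, hd⟩
  have hc0 : c ≠ 0 := by
    rintro rfl
    rw [zero_mul, zero_pow hn] at hP
    exact hg0 ((associated_zero_iff_eq_zero g).1 hP.symm)
  obtain ⟨i, hi⟩ := hdvd c (((dvd_mul_right c d).trans (dvd_pow_self _ hn)).trans hP.dvd)
  have hcd : Associated (c ^ n) ((c * d) ^ (n * i)) := by
    rw [pow_mul]
    exact hi.trans hP.symm.pow_pow
  have hpos : 0 < n * i := pos_of_pow_associated_pow hn hc hcd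
  have hlt : n * i < n := lt_of_pow_associated_mul_pow hn hc0 hd hcd
  exact hlt.not_ge (Nat.le_mul_of_pos_right n (Nat.pos_of_mul_pos_left hpos))

end Cancel

section IntegrallyClosed

variable {R : Type*} [CommRing R] [IsDomain R] [IsIntegrallyClosed R] {a g : R} {n p i : ℕ}

theorem exists_pow_associated_of_coprime (hn : 1 < n) (hin : i.Coprime n) (hg : g ≠ 0)
    (h : Associated (a ^ n) (g ^ i)) : ∃ P, Associated (P ^ n) g := by
  obtain ⟨m, -, hm⟩ := Nat.exists_mul_mod_eq_one_of_coprime hin hn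
  obtain ⟨k, hk⟩ : ∃ k, i * m = k * n + 1 := ⟨i * m / n, by rw [← hm, Nat.div_add_mod']⟩
  have hpow : Associated ((a ^ m) ^ n) ((g ^ k) ^ n * g) := by
    rw [pow_right_comm, ← pow_mul g, ← pow_succ, ← hk, pow_mul]
    exact h.pow_pow
  obtain ⟨P, hP⟩ : g ^ k ∣ a ^ m :=
    (IsIntegrallyClosed.pow_dvd_pow_iff (by lia)).1 ((dvd_mul_right _ g).trans hpow.symm.dvd)
  rw [hP, mul_pow] at hpow
  exact ⟨P, hpow.of_mul_left (.refl _) (pow_ne_zero n (pow_ne_zero k hg))⟩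

theorem not_irreducible_iff_exists_irreducible_pow_associated (hp : p.Prime) (hg0 : g ≠ 0)
    (hg : ¬IsUnit g) (hdvd : ∀ a, a ∣ g → ∃ i, Associated (a ^ p) (g ^ i)) :
    ¬Irreducible g ↔ ∃ P, Irreducible P ∧ Associated (P ^ p) g := by
  refine ⟨fun hirr ↦ ?_, ?_⟩
  · obtain ⟨a, b, rfl, ha, hb⟩ : ∃ a b, g = a * b ∧ ¬IsUnit a ∧ ¬IsUnit b := by
      simpa [irreducible_iff, hg] using hirr
    obtain ⟨i, hi⟩ := hdvd a (dvd_mul_right a b)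
    have hpos : 0 < i := pos_of_pow_associated_pow hp.ne_zero ha hi
    have hlt : i < p := lt_of_pow_associated_mul_pow hp.ne_zero (left_ne_zero_of_mul hg0) hb hi
    obtain ⟨P, hP⟩ := exists_pow_associated_of_coprime hp.one_lt
      (Nat.coprime_of_lt_prime hpos.ne' hlt hp).symm hg0 hi
    exact ⟨P, irreducible_of_pow_associated hp.ne_zero hg0 hg hdvd hP, hP⟩
  · rintro ⟨P, -, hP⟩ hirr
    exact not_irreducible_pow hp.ne_one (hP.symm.irreducible hirr)

end IntegrallyClosed

theorem expand_map_frobenius {R : Type*} [CommSemiring R] (p : ℕ) [ExpChar R p] (a : R[X]) :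
    expand R p (a.map (frobenius R p)) = a ^ p := by
  rw [← map_expand, map_frobenius_expand]

theorem exists_pow_associated_expand_pow_of_dvd {R : Type*} [CommRing R] [IsDomain R] {p : ℕ}
    [ExpChar R p] {f a : R[X]} (hf : Prime f) (ha : a ∣ expand R p f) :
    ∃ i, Associated (a ^ p) (expand R p f ^ i) := by
  have hdvd : a.map (frobenius R p) ∣ f ^ p := by
    rw [← map_frobenius_expand p f]
    exact map_dvd (mapRingHom (frobenius R p)) ha
  obtain ⟨i, -, hi⟩ := (dvd_prime_pow hf p).1 hdvd
  refine ⟨i, ?_⟩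
  rw [← expand_map_frobenius, ← map_pow]
  exact hi.map (expand R p)

theorem associated_iff_exists_C_mul_eq {R : Type*} [CommSemiring R] [NoZeroDivisors R]
    {f g : R[X]} : Associated f g ↔ ∃ u : Rˣ, C (u : R) * f = g := by
  constructor
  · rintro ⟨v, rfl⟩
    obtain ⟨r, hr, hrv⟩ := Polynomial.isUnit_iff.1 v.isUnit
    exact ⟨hr.unit, by rw [hr.unit_spec, hrv, mul_comm]⟩
  · rintro ⟨u, rfl⟩
    exact associated_unit_mul_right f _ (isUnit_C.2 u.isUnit)

theorem stmt12_general {Z : Type*} [CommRing Z] [IsDomain Z] [IsIntegrallyClosed Z]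
    (p : ℕ) (hp : p.Prime) [CharP Z p] (f : Polynomial Z) (hf : Prime f) :
    ¬ Irreducible (f.comp (X ^ p)) ↔
      ∃ (u : Zˣ) (P : Polynomial Z), Irreducible P ∧ C ((u : Z)) * f.comp (X ^ p) = P ^ p := by
  have : ExpChar Z p := .prime hp
  have : IsLocalHom (expand Z p) := isLocalHom_expand Z hp.pos
  have hg0 : expand Z p f ≠ 0 := (expand_ne_zero hp.pos).2 hf.ne_zero
  have hg : ¬IsUnit (expand Z p f) := fun h ↦ hf.not_isUnit (isUnit_of_map_unit (expand Z p) f h)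
  rw [← expand_eq_comp_X_pow, not_irreducible_iff_exists_irreducible_pow_associated hp hg0 hg
    fun a ↦ exists_pow_associated_expand_pow_of_dvd hf, exists_comm]
  simp only [exists_and_left, Associated.comm (x := _ ^ p), associated_iff_exists_C_mul_eq]

theorem stmt12 {Z : Type*} [CommRing Z] [IsDomain Z] [UniqueFactorizationMonoid Z]
    (p : ℕ) (hp : p.Prime) [CharP Z p]
    (f : Polynomial Z) (hf : Irreducible f) (hdeg : 0 < f.natDegree) :
    ¬ Irreducible (f.comp (X ^ p)) ↔
      ∃ (u : Zˣ) (P : Polynomial Z), Irreducible P ∧ C ((u : Z)) * f.comp (X ^ p) = P ^ p :=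
  stmt12_general p hp f hf.prime
end

section
/- Let Z be a unique factorization domain and let f ∈ Z[X] be a nonconstant polynomial, irreducible in Z[X], with leading coefficient a and nonzero constant coefficient b. If a is not a unit of Z or b is not a unit of Z, then the set of prime numbers p such that f(X^p) is not irreducible in Z[X] is finite. -/
open Polynomial

/-!
Let `N g = Res_Y(Y ^ n - X, g(Y))` be the norm of `g` for the extension `R[X ^ n] ⊆ R[X]`, so that
`N (f(X ^ n)) = f ^ n`, `(N g)(0) = g(0) ^ n`, and `g` is a unit as soon as `N g` is.
If `f(X ^ n) = g h` with `f` prime, then `N g` is associated to some `f ^ i` with `i ≤ n`. Comparing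
the multiplicities of a prime `q` in the constant coefficients shows that `n` divides `i m`, where
`m` is the multiplicity of `q` in `f(0)`. If `n` is coprime to `m` this forces `i = 0` or `i = n`,
so `g` or `h` is a unit. Hence, when `q` divides `f(0)`, only the primes dividing `m` can be
exceptional. A nonunit leading coefficient becomes a nonunit constant coefficient on passing to the
reverse of `f`.
-/

section Norm

variable {R : Type*} [CommRing R]

lemma resultant_eq_of_monic_of_natDegree_le {f g : R[X]} {k : ℕ} (hf : f.Monic)
    (hg : g.natDegree ≤ k) : resultant f g f.natDegree k = resultant f g := by
  obtain ⟨d, rfl⟩ := Nat.exists_eq_add_of_le hg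
  rw [resultant_add_right_deg f g f.natDegree g.natDegree d le_rfl, hf.coeff_natDegree, one_pow,
    one_mul]

lemma resultant_mul_right_of_monic {f : R[X]} (hf : f.Monic) (g h : R[X]) :
    resultant f (g * h) = resultant f g * resultant f h := by
  rw [← resultant_mul_right f g h f.natDegree le_rfl,
    resultant_eq_of_monic_of_natDegree_le hf natDegree_mul_le]

lemma resultant_eq_of_monic_of_dvd_sub {f g h : R[X]} (hf : f.Monic) (hdvd : f ∣ g - h) :
    resultant f g = resultant f h := by
  obtain ⟨q, hq⟩ := hdvd
  obtain rfl : g = h + f * q := by rw [← hq, add_sub_cancel]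
  let k := max (h + f * q).natDegree (max h.natDegree (q.natDegree + f.natDegree))
  calc
    resultant f (h + f * q) = resultant f (h + f * q) f.natDegree k :=
      (resultant_eq_of_monic_of_natDegree_le hf (by simp [k])).symm
    _ = resultant f h f.natDegree k :=
      resultant_add_mul_right f h q f.natDegree k (by simp [k]) le_rfl
    _ = resultant f h := resultant_eq_of_monic_of_natDegree_le hf (by simp [k])

/-- For `n ≠ 0`, the norm of `g` along the free extension `expand R n : R[X] → R[X]` of rank `n`.
It is encoded as the resultant of `Y ^ n - X` and `g(Y)` with respect to the outer variable
`Y` of `R[X][X]`. -/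
noncomputable def expandNorm (n : ℕ) (g : R[X]) : R[X] :=
  resultant (X ^ n - C X : R[X][X]) (g.map C)

lemma expandNorm_mul {n : ℕ} (hn : n ≠ 0) (g h : R[X]) :
    expandNorm n (g * h) = expandNorm n g * expandNorm n h := by
  rw [expandNorm, Polynomial.map_mul, resultant_mul_right_of_monic (monic_X_pow_sub_C X hn)]
  rfl

lemma X_pow_sub_C_X_dvd_map_C_expand_sub_C (n : ℕ) (f : R[X]) :
    (X ^ n - C X : R[X][X]) ∣ (expand R n f).map C - C f := by
  have h := sub_dvd_eval_sub (X ^ n : R[X][X]) (C X) (f.map (C.comp C))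
  rwa [eval_map, eval_map, ← hom_eval₂, eval₂_C_X, ← eval₂_map, ← coe_expand, ← map_expand] at h

lemma expandNorm_expand {n : ℕ} (hn : n ≠ 0) (f : R[X]) :
    expandNorm n (expand R n f) = f ^ n := by
  nontriviality R
  rw [expandNorm, resultant_eq_of_monic_of_dvd_sub (monic_X_pow_sub_C X hn)
    (X_pow_sub_C_X_dvd_map_C_expand_sub_C n f), natDegree_X_pow_sub_C, natDegree_C,
    resultant_C_zero_right]

lemma coeff_zero_expandNorm (n : ℕ) (g : R[X]) :
    (expandNorm n g).coeff 0 = g.coeff 0 ^ n := by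
  nontriviality R
  have hX : (X ^ n - C X : R[X][X]).map constantCoeff = X ^ n := by simp
  have hg : (g.map C).map constantCoeff = g := by
    rw [map_map, show constantCoeff.comp C = RingHom.id R by ext; simp, map_id]
  rw [expandNorm, ← constantCoeff_apply, ← resultant_map_map, hX, hg, natDegree_X_pow_sub_C,
    natDegree_map_eq_of_injective C_injective, resultant_X_pow_left g n _ le_rfl]

lemma isUnit_of_isUnit_expandNorm {n : ℕ} (hn : n ≠ 0) {g : R[X]} (hg : IsUnit (expandNorm n g)) :
    IsUnit g := by
  have hcop : IsCoprime (X ^ n - C X : R[X][X]) (g.map C) :=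
    (isUnit_resultant_iff_isCoprime (monic_X_pow_sub_C X hn)).mp hg
  -- The substitution `X = Y ^ n` kills `Y ^ n - X`, leaving `g` coprime to `0`.
  have hsubst := hcop.map (eval₂RingHom (expand R n : R[X] →+* R[X]) X)
  have hC : (expand R n : R[X] →+* R[X]).comp C = C := by ext; simp
  simpa [eval₂_map, hC, isCoprime_zero_left] using hsubst

end Norm

lemma isUnit_or_isUnit_of_mul_eq_prime_pow {M : Type*} [CommMonoidWithZero M] [IsCancelMulZero M]
    {q a b : M} {n : ℕ} (hq : Prime q) (hab : a * b = q ^ n)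
    (hdvd : ∀ i, Associated a (q ^ i) → n ∣ i) : IsUnit a ∨ IsUnit b := by
  obtain ⟨i, hi, ha⟩ := (dvd_prime_pow hq n).mp (Dvd.intro b hab)
  rcases Nat.eq_zero_or_pos i with rfl | hi_pos
  · exact .inl (associated_one_iff_isUnit.mp (by simpa using ha))
  · obtain rfl : i = n := le_antisymm hi (Nat.le_of_dvd hi_pos (hdvd i ha))
    have ha0 : a ≠ 0 := ha.ne_zero_iff.mpr (pow_ne_zero i hq.ne_zero)
    have hassoc : Associated (a * b) (a * 1) := by rw [hab, mul_one]; exact ha.symm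
    exact .inr (associated_one_iff_isUnit.mp (hassoc.of_mul_left (.refl a) ha0))

lemma dvd_of_associated_pow_of_coprime_multiplicity {M : Type*} [CommMonoidWithZero M]
    [IsCancelMulZero M] {q a b : M} {i n : ℕ} (hq : Prime q) (ha : FiniteMultiplicity q a)
    (hn : n ≠ 0) (hcop : n.Coprime (multiplicity q a)) (hab : Associated (a ^ i) (b ^ n)) :
    n ∣ i := by
  have hb : FiniteMultiplicity q b :=
    (ha.pow hq).imp fun _ hndvd hdvd => hndvd (hdvd.trans ((dvd_pow_self b hn).trans hab.dvd'))
  have hmul : i * multiplicity q a = n * multiplicity q b := by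
    rw [← ha.multiplicity_pow hq, ← hb.multiplicity_pow hq,
      multiplicity_eq_of_associated_right hab]
  exact hcop.dvd_of_dvd_mul_right (Dvd.intro _ hmul.symm)

lemma irreducible_expand_of_coprime_multiplicity_coeff_zero {R : Type*} [CommRing R] [IsDomain R]
    {f : R[X]} {q : R} {n : ℕ} (hf : Prime f) (hq : Prime q)
    (hfin : FiniteMultiplicity q (f.coeff 0)) (hn : n ≠ 0)
    (hcop : n.Coprime (multiplicity q (f.coeff 0))) : Irreducible (expand R n f) := by
  have := isLocalHom_expand R hn.bot_lt
  refine ⟨fun hunit => hf.not_isUnit (isUnit_of_map_unit (expand R n) f hunit), fun g h hgh => ?_⟩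
  have hnorm : expandNorm n g * expandNorm n h = f ^ n := by
    rw [← expandNorm_mul hn, ← hgh, expandNorm_expand hn]
  refine (isUnit_or_isUnit_of_mul_eq_prime_pow hf hnorm fun i hi => ?_).imp
    (isUnit_of_isUnit_expandNorm hn) (isUnit_of_isUnit_expandNorm hn)
  have hcoeff : Associated (f.coeff 0 ^ i) (g.coeff 0 ^ n) := by
    have hmap := hi.symm.map (constantCoeff (R := R))
    rwa [map_pow, constantCoeff_apply, constantCoeff_apply, coeff_zero_expandNorm] at hmap
  exact dvd_of_associated_pow_of_coprime_multiplicity hq hfin hn hcop hcoeff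

lemma finite_setOf_prime_not_irreducible_expand {R : Type*} [CommRing R] [IsDomain R]
    [UniqueFactorizationMonoid R] {f : R[X]} (hf : Irreducible f) (hne : f.coeff 0 ≠ 0)
    (hunit : ¬ IsUnit (f.coeff 0)) :
    {p : ℕ | p.Prime ∧ ¬ Irreducible (expand R p f)}.Finite := by
  obtain ⟨q, hq, hqf⟩ := WfDvdMonoid.exists_irreducible_factor hunit hne
  have hfin : FiniteMultiplicity q (f.coeff 0) := .of_prime_left hq.prime hne
  have hmult : multiplicity q (f.coeff 0) ≠ 0 := fun h => multiplicity_eq_zero.mp h hqf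
  refine (Nat.divisors (multiplicity q (f.coeff 0))).finite_toSet.subset ?_
  rintro p ⟨hp, hred⟩
  refine Nat.mem_divisors.mpr ⟨?_, hmult⟩
  contrapose! hred
  exact irreducible_expand_of_coprime_multiplicity_coeff_zero hf.prime hq.prime hfin hp.ne_zero
    (hp.coprime_iff_not_dvd.mpr hred)

lemma revAt_mul (N k n : ℕ) : revAt (N * n) (k * n) = revAt N k * n := by
  rcases le_or_gt k N with hk | hk
  · rw [revAt_le hk, revAt_le (Nat.mul_le_mul_right n hk), Nat.sub_mul]
  · rcases n.eq_zero_or_pos with rfl | hn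
    · simp
    · rw [revAt_eq_self_of_lt hk, revAt_eq_self_of_lt (Nat.mul_lt_mul_of_pos_right hk hn)]

lemma reflect_expand {R : Type*} [CommSemiring R] (N n : ℕ) (f : R[X]) :
    reflect (N * n) (expand R n f) = expand R n (reflect N f) := by
  induction f using Polynomial.induction_on' with
  | add f g hf hg => rw [map_add, reflect_add, reflect_add, hf, hg, map_add]
  | monomial k a =>
    rw [expand_monomial, ← C_mul_X_pow_eq_monomial, ← C_mul_X_pow_eq_monomial,
      reflect_C_mul_X_pow, reflect_C_mul_X_pow, revAt_mul, map_mul, expand_C, map_pow, expand_X,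
      ← pow_mul, mul_comm n]

lemma reverse_expand {R : Type*} [CommSemiring R] (n : ℕ) (f : R[X]) :
    (expand R n f).reverse = expand R n f.reverse := by
  rw [reverse, natDegree_expand, reflect_expand, reverse]

lemma irreducible_mirror_iff {R : Type*} [Ring R] [NoZeroDivisors R] {f : R[X]} :
    Irreducible f.mirror ↔ Irreducible f :=
  MulEquiv.irreducible_iff <|
    MulEquiv.mk mirror_involutive.toPerm fun g h => mirror_mul_of_domain g h

lemma irreducible_reverse_iff {R : Type*} [Ring R] [NoZeroDivisors R] {f : R[X]}
    (hf : f.coeff 0 ≠ 0) : Irreducible f.reverse ↔ Irreducible f := by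
  rw [← irreducible_mirror_iff (f := f), mirror,
    natTrailingDegree_eq_zero.mpr (.inr hf), pow_zero, mul_one]

theorem stmt14 {Z : Type*} [CommRing Z] [IsDomain Z] [UniqueFactorizationMonoid Z]
    (f : Polynomial Z) (hf : Irreducible f) (hdeg : 0 < f.natDegree)
    (hb : f.coeff 0 ≠ 0)
    (h : ¬ IsUnit f.leadingCoeff ∨ ¬ IsUnit (f.coeff 0)) :
    {p : ℕ | p.Prime ∧ ¬ Irreducible (f.comp (X ^ p))}.Finite := by
  simp only [← expand_eq_comp_X_pow]
  rcases h with hlead | hconst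
  · have hrev : {p : ℕ | p.Prime ∧ ¬ Irreducible (expand Z p f.reverse)}.Finite :=
      finite_setOf_prime_not_irreducible_expand ((irreducible_reverse_iff hb).mpr hf)
        (by simpa using hf.ne_zero) (by rwa [coeff_zero_reverse])
    refine hrev.subset fun p ⟨hp, hred⟩ => ⟨hp, ?_⟩
    have hb_expand : (expand Z p f).coeff 0 ≠ 0 := by simpa [coeff_expand hp.pos] using hb
    rwa [← reverse_expand, irreducible_reverse_iff hb_expand]
  · exact finite_setOf_prime_not_irreducible_expand hf hb hconst
end
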